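/- Let S be a finite set. Every sequence (W_n)_{n≥1} of S-colored graphons has a subsequence (W_{n_k}) and an S-colored graphon W_0 such that δ_□^S(W_{n_k}, W_0) → 0 as k → ∞. Equivalently, the space of S-colored graphons modulo δ_□^S-distance zero is a compact metric space. -/

import Mathlib

/-!
Compactness follows from the weak regularity lemma and martingale convergence.

Finite partitions of `[0,1]` are bounded measurable maps `ℝ → ℕ`, and a refinement of `P` has the form
`Nat.pair P P'`. By an energy increment, each colored graphon has a tower of partitions `R 0, R 1, …`,
each refining the previous one, such that `R 0` is the coloring, the number of classes at level `k` is
bounded independently of the graphon, and the step function of cell averages over `R (k + 1)` is within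
`1 / (k + 1)` of the graphon in cut norm (`exists_regular_tower`).

For a sequence of graphons, a subsequence makes all class measures and all cell integrals converge
(`exists_subseq_stats`). The limits satisfy the same consistency relations (`TowerStats`). As Lebesgue
measure has no atoms, the limit class measures are realised by a tower `Q` of partitions of `[0,1]`;
the limit densities on its cells form a bounded martingale, which converges in `L¹` to a graphon `U`
(`TowerStats.exists_graphon`). The limit object is `U`, colored by `Q 0`.

To compare a graphon of the subsequence with the limit, `R k` is matched with `Q k` by a measure
preserving bijection. Both partitions are almost constant on short intervals of equal length, and a
permutation of these intervals aligns the classes up to the discrepancy of their measures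
(`exists_mpb_matching`). The distance is then bounded by the regularity error, the deviation of the
level-`k` statistics from their limits, and the `L¹` distance from `U` to its level-`k` densities
(`deltaCutS_estimate`); choosing `k` and then the index in the subsequence makes the bound small.
-/

open MeasureTheory Set Filter
open scoped symmDiff

noncomputable section

/-- The unit interval `[0,1]` as a subset of `ℝ`. -/
def I01 : Set ℝ := Set.Icc 0 1

/-- A graphon: a symmetric measurable kernel with values in `[0,1]`. -/
structure Graphon where
  W : ℝ → ℝ → ℝ
  measurable : Measurable (Function.uncurry W)
  symm : ∀ x y, W x y = W y x
  nonneg : ∀ x y, 0 ≤ W x y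
  le_one : ∀ x y, W x y ≤ 1

/-- The cut norm `‖U‖_□` of a kernel `U`. -/
def cutNorm (U : ℝ → ℝ → ℝ) : ℝ :=
  sSup { r | ∃ A B : Set ℝ, MeasurableSet A ∧ MeasurableSet B ∧ A ⊆ I01 ∧ B ⊆ I01 ∧
    r = |∫ x in A, ∫ y in B, U x y| }

/-- A measure-preserving bijection of `[0,1]`. -/
def IsMPB (σ : ℝ → ℝ) : Prop :=
  Measurable σ ∧ Set.BijOn σ I01 I01 ∧
    MeasurePreserving σ (volume.restrict I01) (volume.restrict I01)

/-- An `S`-colored graphon: a graphon together with a coloring `c : [0,1] → S` with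
measurable color classes. -/
structure CGraphon (S : Type*) where
  K : Graphon
  c : ℝ → S
  measC : ∀ s : S, MeasurableSet (c ⁻¹' {s})

/-- The color part of the colored cut distance:
`Σ_{s ∈ S} μ(c⁻¹(s) Δ c'⁻¹(s))` (color classes as subsets of `[0,1]`). -/
def colorDist {S : Type*} [Fintype S] (c c' : ℝ → S) : ℝ :=
  ∑ s : S, (volume ((I01 ∩ c ⁻¹' {s}) ∆ (I01 ∩ c' ⁻¹' {s}))).toReal

/-- The colored cut distance `δ_□^S(W, W') = inf_σ ‖W − (W')^σ‖_□^S`, the infimum running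
over measure-preserving bijections `σ` of `[0,1]`. -/
def deltaCutS {S : Type*} [Fintype S] (W W' : CGraphon S) : ℝ :=
  sInf { r | ∃ σ, IsMPB σ ∧
    r = cutNorm (fun x y => W.K.W x y - W'.K.W (σ x) (σ y))
        + colorDist W.c fun y => W'.c (σ y) }

/-! ### Weak regularity -/

/-- Lebesgue measure on the unit interval. -/
abbrev lam : Measure ℝ := volume.restrict I01

/-- Lebesgue measure on the unit square. -/
abbrev lam2 : Measure (ℝ × ℝ) := lam.prod lam

instance isProbabilityMeasure_lam : IsProbabilityMeasure lam :=
  ⟨by simp [I01]⟩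

lemma integrable_of_bdd {Ω : Type*} [MeasurableSpace Ω] {m : Measure Ω} [IsFiniteMeasure m]
    {f : Ω → ℝ} (hf : Measurable f) (C : ℝ) (h : ∀ x, |f x| ≤ C) : Integrable f m :=
  Integrable.of_bound hf.aestronglyMeasurable C (ae_of_all _ h)

/-- Measure of the class `a` of a partition of `[0,1]`. Finite measurable partitions are encoded
throughout as bounded measurable maps `P : ℝ → ℕ`, the classes being the fibres of `P`. -/
def mass (P : ℝ → ℕ) (a : ℕ) : ℝ := lam.real (P ⁻¹' {a})

lemma mass_nonneg (P : ℝ → ℕ) (a : ℕ) : 0 ≤ mass P a := measureReal_nonneg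

/-- The cell of the square spanned by the classes `a` and `b` of the partition `P`. -/
def cell (P : ℝ → ℕ) (a b : ℕ) : Set (ℝ × ℝ) := (P ⁻¹' {a}) ×ˢ (P ⁻¹' {b})

lemma measurableSet_cell {P : ℝ → ℕ} (hP : Measurable P) (a b : ℕ) :
    MeasurableSet (cell P a b) :=
  (hP (measurableSet_singleton a)).prod (hP (measurableSet_singleton b))

/-- Integral of the kernel `W` over the cell `(a, b)`. -/
def cellInt (W : ℝ × ℝ → ℝ) (P : ℝ → ℕ) (a b : ℕ) : ℝ := ∫ z in cell P a b, W z ∂lam2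

/-- Average of the kernel `W` over the cell `(a, b)`; it is `0` on null cells. -/
def avg (W : ℝ × ℝ → ℝ) (P : ℝ → ℕ) (a b : ℕ) : ℝ := cellInt W P a b / (mass P a * mass P b)

lemma mass_le_one (P : ℝ → ℕ) (a : ℕ) : mass P a ≤ 1 := measureReal_le_one

lemma real_cell (P : ℝ → ℕ) (a b : ℕ) : lam2.real (cell P a b) = mass P a * mass P b :=
  measureReal_prod_prod _ _

lemma mass_eq_zero {P : ℝ → ℕ} {B : ℕ} (hB : ∀ x, P x < B) {a : ℕ} (ha : B ≤ a) :
    mass P a = 0 := by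
  have : P ⁻¹' {a} = ∅ := by
    ext x
    have := hB x
    simp
    omega
  simp [mass, this]

lemma setIntegral_sum_fibers {Ω : Type*} [MeasurableSpace Ω] {m : Measure Ω}
    {ι : Type*} [MeasurableSpace ι] [MeasurableSingletonClass ι]
    {p : Ω → ι} (hp : Measurable p) (F : Finset ι) {s : Set Ω} (hs : MeasurableSet s)
    (hF : ∀ x ∈ s, p x ∈ F) {f : Ω → ℝ} (hf : Integrable f m) :
    ∫ x in s, f x ∂m = ∑ i ∈ F, ∫ x in s ∩ p ⁻¹' {i}, f x ∂m := by
  have h : s = ⋃ i ∈ F, s ∩ p ⁻¹' {i} := by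
    ext x
    simp only [mem_iUnion, mem_inter_iff, mem_preimage, mem_singleton_iff]
    exact ⟨fun hx => ⟨p x, hF x hx, hx, rfl⟩, fun ⟨_, _, hx, _⟩ => hx⟩
  conv_lhs => rw [h]
  rw [integral_biUnion_finset]
  · exact fun i _ => hs.inter (hp (measurableSet_singleton i))
  · intro i _ j _ hij
    refine Set.disjoint_left.2 fun x hx hx' => hij ?_
    exact hx.2.symm.trans hx'.2
  · exact fun i _ => hf.integrableOn

lemma integral_sum_cells {P : ℝ → ℕ} (hP : Measurable P) {B : ℕ} (hB : ∀ x, P x < B)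
    {f : ℝ × ℝ → ℝ} (hf : Integrable f lam2) :
    ∫ z, f z ∂lam2 =
      ∑ a ∈ Finset.range B, ∑ b ∈ Finset.range B, ∫ z in cell P a b, f z ∂lam2 := by
  rw [← Finset.sum_product', ← setIntegral_univ,
    setIntegral_sum_fibers (p := fun z : ℝ × ℝ => (P z.1, P z.2)) (by fun_prop)
      (Finset.range B ×ˢ Finset.range B) MeasurableSet.univ (by simp [hB]) hf]
  refine Finset.sum_congr rfl fun i _ => ?_
  congr 2
  ext z
  simp [cell, Prod.ext_iff]

lemma integrable_step {P : ℝ → ℕ} (hP : Measurable P) {B : ℕ} (hB : ∀ x, P x < B)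
    (G : ℕ → ℕ → ℝ) : Integrable (fun z : ℝ × ℝ => G (P z.1) (P z.2)) lam2 := by
  have hm : Measurable (fun z : ℝ × ℝ => G (P z.1) (P z.2)) :=
    (measurable_of_countable (fun q : ℕ × ℕ => G q.1 q.2)).comp
      (show Measurable fun z : ℝ × ℝ => (P z.1, P z.2) by fun_prop)
  refine integrable_of_bdd hm
    (∑ a ∈ Finset.range B, ∑ b ∈ Finset.range B, |G a b|) fun z => ?_
  refine le_trans ?_ (Finset.single_le_sum (f := fun a => ∑ b ∈ Finset.range B, |G a b|)
    (fun i _ => Finset.sum_nonneg fun _ _ => abs_nonneg _) (Finset.mem_range.2 (hB z.1)))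
  exact Finset.single_le_sum (f := fun b => |G (P z.1) b|)
    (fun i _ => abs_nonneg _) (Finset.mem_range.2 (hB z.2))

lemma setIntegral_cell_step {P : ℝ → ℕ} (hP : Measurable P) (G : ℕ → ℕ → ℝ) (a b : ℕ) :
    ∫ z in cell P a b, G (P z.1) (P z.2) ∂lam2 = G a b * (mass P a * mass P b) := by
  rw [setIntegral_congr_fun (g := fun _ => G a b) (measurableSet_cell hP a b)]
  · rw [setIntegral_const, real_cell, smul_eq_mul, mul_comm]
  · rintro z ⟨h1, h2⟩
    simp only [mem_preimage, mem_singleton_iff] at h1 h2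
    simp [h1, h2]

lemma integral_step {P : ℝ → ℕ} (hP : Measurable P) {B : ℕ} (hB : ∀ x, P x < B)
    (G : ℕ → ℕ → ℝ) : ∫ z, G (P z.1) (P z.2) ∂lam2 =
      ∑ a ∈ Finset.range B, ∑ b ∈ Finset.range B, G a b * (mass P a * mass P b) := by
  rw [integral_sum_cells hP hB (integrable_step hP hB G)]
  simp only [setIntegral_cell_step hP]

/-- A measurable kernel with values in `[0,1]`, as a function of one variable in the square. -/
structure IsKernel (W : ℝ × ℝ → ℝ) : Prop where
  meas : Measurable W
  nonneg : ∀ z, 0 ≤ W z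
  le_one : ∀ z, W z ≤ 1

lemma IsKernel.integrable {W : ℝ × ℝ → ℝ} (hW : IsKernel W) : Integrable W lam2 :=
  integrable_of_bdd hW.meas 1 fun z => abs_le.2 ⟨by linarith [hW.nonneg z], hW.le_one z⟩

lemma cellInt_nonneg {W : ℝ × ℝ → ℝ} (hW : IsKernel W) (P : ℝ → ℕ) (a b : ℕ) :
    0 ≤ cellInt W P a b := integral_nonneg hW.nonneg

lemma cellInt_le {W : ℝ × ℝ → ℝ} (hW : IsKernel W) (P : ℝ → ℕ) (a b : ℕ) :
    cellInt W P a b ≤ mass P a * mass P b := by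
  have h := integral_mono (μ := lam2.restrict (cell P a b)) hW.integrable.integrableOn
    (integrable_const 1) hW.le_one
  simpa [cellInt, real_cell] using h

/-- Division by a possibly vanishing mass is harmless, since the numerator vanishes with it. -/
lemma div_mul_cancel_of_le {r m : ℝ} (h0 : 0 ≤ r) (h : r ≤ m) : r / m * m = r := by
  rcases eq_or_ne m 0 with hm | hm
  · subst hm
    simp [le_antisymm h h0]
  · exact div_mul_cancel₀ r hm

lemma avg_mul {W : ℝ × ℝ → ℝ} (hW : IsKernel W) (P : ℝ → ℕ) (a b : ℕ) :
    avg W P a b * (mass P a * mass P b) = cellInt W P a b :=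
  div_mul_cancel_of_le (cellInt_nonneg hW P a b) (cellInt_le hW P a b)

lemma avg_nonneg {W : ℝ × ℝ → ℝ} (hW : IsKernel W) (P : ℝ → ℕ) (a b : ℕ) :
    0 ≤ avg W P a b :=
  div_nonneg (cellInt_nonneg hW P a b) (mul_nonneg (mass_nonneg _ _) (mass_nonneg _ _))

lemma avg_le_one {W : ℝ × ℝ → ℝ} (hW : IsKernel W) (P : ℝ → ℕ) (a b : ℕ) :
    avg W P a b ≤ 1 :=
  div_le_one_of_le₀ (cellInt_le hW P a b) (mul_nonneg (mass_nonneg _ _) (mass_nonneg _ _))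

/-- Difference between `W` and its step-function average over the cells of `P`. -/
def resid (W : ℝ × ℝ → ℝ) (P : ℝ → ℕ) (z : ℝ × ℝ) : ℝ := W z - avg W P (P z.1) (P z.2)

lemma measurable_step {P : ℝ → ℕ} (hP : Measurable P) (G : ℕ → ℕ → ℝ) :
    Measurable fun z : ℝ × ℝ => G (P z.1) (P z.2) :=
  (measurable_of_countable (fun q : ℕ × ℕ => G q.1 q.2)).comp
    (show Measurable fun z : ℝ × ℝ => (P z.1, P z.2) by fun_prop)

lemma measurable_resid {W : ℝ × ℝ → ℝ} (hW : IsKernel W) {P : ℝ → ℕ} (hP : Measurable P) :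
    Measurable (resid W P) := hW.meas.sub (measurable_step hP _)

lemma abs_resid_le {W : ℝ × ℝ → ℝ} (hW : IsKernel W) (P : ℝ → ℕ) (z : ℝ × ℝ) :
    |resid W P z| ≤ 1 := by
  have := hW.nonneg z
  have := hW.le_one z
  have := avg_nonneg hW P (P z.1) (P z.2)
  have := avg_le_one hW P (P z.1) (P z.2)
  rw [resid, abs_le]
  constructor <;> linarith

/-- The residual is orthogonal in `L²` to every step function on the cells of `P`. -/
lemma integral_resid_mul_step {W : ℝ × ℝ → ℝ} (hW : IsKernel W) {P : ℝ → ℕ} (hP : Measurable P)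
    {B : ℕ} (hB : ∀ x, P x < B) (G : ℕ → ℕ → ℝ) :
    ∫ z, resid W P z * G (P z.1) (P z.2) ∂lam2 = 0 := by
  have hR : Integrable (resid W P) lam2 :=
    integrable_of_bdd (measurable_resid hW hP) 1 (abs_resid_le hW P)
  rw [integral_sum_cells hP hB]
  · refine Finset.sum_eq_zero fun a _ => Finset.sum_eq_zero fun b _ => ?_
    rw [setIntegral_congr_fun (g := fun z => resid W P z * G a b) (measurableSet_cell hP a b)]
    · rw [integral_mul_const]
      have : ∫ z in cell P a b, resid W P z ∂lam2 = 0 := by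
        unfold resid
        rw [integral_sub hW.integrable.integrableOn (integrable_step hP hB _).integrableOn,
          setIntegral_cell_step hP, avg_mul hW]
        simp [cellInt]
      simp [this]
    · rintro z ⟨h1, h2⟩
      simp only [mem_preimage, mem_singleton_iff] at h1 h2
      simp [h1, h2]
  · exact (integrable_step hP hB G).bdd_mul (c := 1) (measurable_resid hW hP).aestronglyMeasurable
      (ae_of_all _ (abs_resid_le hW P))

/-- Squared `L²` distance from `W` to its cell averages. -/
def energy (W : ℝ × ℝ → ℝ) (P : ℝ → ℕ) : ℝ := ∫ z, resid W P z ^ 2 ∂lam2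

/-- The cell averages are the best `L²` approximation of `W` among step functions on `P`. -/
lemma energy_le {W : ℝ × ℝ → ℝ} (hW : IsKernel W) {P : ℝ → ℕ} (hP : Measurable P)
    {B : ℕ} (hB : ∀ x, P x < B) (G : ℕ → ℕ → ℝ) :
    energy W P ≤ ∫ z, (W z - G (P z.1) (P z.2)) ^ 2 ∂lam2 := by
  set H : ℕ → ℕ → ℝ := fun a b => avg W P a b - G a b
  have e : ∀ z : ℝ × ℝ, (W z - G (P z.1) (P z.2)) ^ 2 = resid W P z ^ 2 +
      (2 * (resid W P z * H (P z.1) (P z.2)) + H (P z.1) (P z.2) ^ 2) := by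
    intro z
    simp only [resid, H]
    ring
  have i1 : Integrable (fun z => resid W P z ^ 2) lam2 :=
    integrable_of_bdd ((measurable_resid hW hP).pow_const 2) 1 fun z => by
      rw [abs_pow]
      exact pow_le_one₀ (abs_nonneg _) (abs_resid_le hW P z)
  have i2 : Integrable (fun z => resid W P z * H (P z.1) (P z.2)) lam2 :=
    (integrable_step hP hB H).bdd_mul (c := 1) (measurable_resid hW hP).aestronglyMeasurable
      (ae_of_all _ (abs_resid_le hW P))
  have i3 := integrable_step hP hB (fun a b => H a b ^ 2)
  simp only [e]
  have i23 : Integrable (fun z : ℝ × ℝ => 2 * (resid W P z * H (P z.1) (P z.2)) +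
      H (P z.1) (P z.2) ^ 2) lam2 := (i2.const_mul 2).add i3
  rw [integral_add i1 i23, integral_add (i2.const_mul 2) i3,
    integral_const_mul, integral_resid_mul_step hW hP hB]
  have : 0 ≤ ∫ z : ℝ × ℝ, H (P z.1) (P z.2) ^ 2 ∂lam2 := integral_nonneg fun z => sq_nonneg _
  unfold energy
  linarith

/-- The residual of `W` over the partition `P` has cut norm at most `ε`. -/
def CutRegular (ε : ℝ) (W : ℝ × ℝ → ℝ) (P : ℝ → ℕ) : Prop :=
  ∀ A B : Set ℝ, MeasurableSet A → MeasurableSet B → |∫ z in A ×ˢ B, resid W P z ∂lam2| ≤ ε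

/-- Energy decrement: if `P'` refines `P` and both `A` and `B` are unions of classes of `P'`, the
energy drops by at least the square of the integral of the residual over `A × B`. -/
lemma energy_refine {W : ℝ × ℝ → ℝ} (hW : IsKernel W) {P : ℝ → ℕ} (hP : Measurable P)
    {P' : ℝ → ℕ} (hP' : Measurable P') {B' : ℕ} (hB' : ∀ x, P' x < B')
    {h : ℕ → ℕ} (hh : ∀ x, h (P' x) = P x) {A B : Set ℝ} (hA : MeasurableSet A)
    (hB : MeasurableSet B) {iA iB : ℕ → ℝ} (hiA : ∀ x, iA (P' x) = A.indicator 1 x)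
    (hiB : ∀ x, iB (P' x) = B.indicator 1 x) :
    energy W P' ≤ energy W P - (∫ z in A ×ˢ B, resid W P z ∂lam2) ^ 2 := by
  set δ := ∫ z in A ×ˢ B, resid W P z ∂lam2 with hδ
  -- Competitor in `energy_le`: the old averages shifted by `δ` on `A × B`.
  refine (energy_le hW hP' hB' fun c d => avg W P (h c) (h d) + δ * (iA c * iB d)).trans ?_
  have hAB := hA.prod hB
  have iR : Integrable (resid W P) lam2 :=
    integrable_of_bdd (measurable_resid hW hP) 1 (abs_resid_le hW P)
  have i1 : Integrable (fun z => resid W P z ^ 2) lam2 :=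
    integrable_of_bdd ((measurable_resid hW hP).pow_const 2) 1 fun z => by
      rw [abs_pow]
      exact pow_le_one₀ (abs_nonneg _) (abs_resid_le hW P z)
  have e : ∀ z : ℝ × ℝ, (W z - (avg W P (h (P' z.1)) (h (P' z.2)) +
      δ * (iA (P' z.1) * iB (P' z.2)))) ^ 2 = resid W P z ^ 2 +
        (A ×ˢ B).indicator (fun z => -2 * δ * resid W P z + δ ^ 2) z := by
    intro z
    rw [hh, hh, hiA, hiB]
    by_cases h1 : z.1 ∈ A <;> by_cases h2 : z.2 ∈ B <;>
      simp [h1, h2, resid, indicator]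
    ring
  simp only [e]
  have i2 : Integrable (fun z => -2 * δ * resid W P z + δ ^ 2) lam2 :=
    (iR.const_mul _).add (integrable_const _)
  rw [integral_add i1 (i2.indicator hAB),
    integral_indicator hAB, integral_add (iR.const_mul _).integrableOn (integrable_const _),
    integral_const_mul, ← hδ]
  have h1 : lam2.real (A ×ˢ B) ≤ 1 := measureReal_le_one
  simp only [integral_const, measureReal_restrict_apply_univ, smul_eq_mul]
  unfold energy
  nlinarith [sq_nonneg δ]

lemma energy_le_one {W : ℝ × ℝ → ℝ} (hW : IsKernel W) {P : ℝ → ℕ} (hP : Measurable P) :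
    energy W P ≤ 1 := by
  have h : energy W P ≤ ∫ _z : ℝ × ℝ, (1:ℝ) ∂lam2 := by
    refine integral_mono ?_ (integrable_const _) fun z => ?_
    · exact integrable_of_bdd ((measurable_resid hW hP).pow_const 2) 1 fun z => by
        rw [abs_pow]
        exact pow_le_one₀ (abs_nonneg _) (abs_resid_le hW P z)
    · simp only [← sq_abs (resid W P z)]
      exact pow_le_one₀ (abs_nonneg _) (abs_resid_le hW P z)
  simpa using h

lemma energy_nonneg (W : ℝ × ℝ → ℝ) (P : ℝ → ℕ) : 0 ≤ energy W P :=
  integral_nonneg fun _ => sq_nonneg _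

/-- A set pair `(A, C)` violating regularity is used to split the classes; refinement is recorded
by `Nat.pair`, so the number of classes stays bounded in terms of the old bounds alone. -/
lemma exists_energy_drop {ε : ℝ} (hε : 0 < ε) {W : ℝ × ℝ → ℝ} {P P' : ℝ → ℕ} {B b : ℕ}
    (hW : IsKernel W) (hP : Measurable P) (hP' : Measurable P') (hB : ∀ x, P x < B)
    (hb : ∀ x, P' x < b) (hreg : ¬ CutRegular ε W fun x => Nat.pair (P x) (P' x)) :
    ∃ P'' : ℝ → ℕ, Measurable P'' ∧ (∀ x, P'' x < Nat.pair b (Nat.pair 2 2)) ∧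
      energy W (fun x => Nat.pair (P x) (P'' x)) ≤
        energy W (fun x => Nat.pair (P x) (P' x)) - ε ^ 2 := by
  classical
  have hpair : Measurable fun q : ℕ × ℕ => Nat.pair q.1 q.2 := measurable_of_countable _
  have hlt : ∀ {a b c d : ℕ}, a < c → b < d → Nat.pair a b < Nat.pair c d := fun h1 h2 =>
    (Nat.pair_lt_pair_left _ h1).trans (Nat.pair_lt_pair_right _ h2)
  unfold CutRegular at hreg
  push Not at hreg
  obtain ⟨A, C, hA, hC, hAC⟩ := hreg
  set cA : ℝ → ℕ := A.indicator 1 with hcA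
  set cC : ℝ → ℕ := C.indicator 1 with hcC
  have mA : Measurable cA := measurable_one.indicator hA
  have mC : Measurable cC := measurable_one.indicator hC
  have lA : ∀ x, cA x < 2 := fun x => by by_cases h : x ∈ A <;> simp [hcA, h]
  have lC : ∀ x, cC x < 2 := fun x => by by_cases h : x ∈ C <;> simp [hcC, h]
  set P'' : ℝ → ℕ := fun x => Nat.pair (P' x) (Nat.pair (cA x) (cC x)) with hP''
  have mP'' : Measurable P'' := hpair.comp (hP'.prodMk (hpair.comp (mA.prodMk mC)))
  have lP'' : ∀ x, P'' x < Nat.pair b (Nat.pair 2 2) := fun x => hlt (hb x) (hlt (lA x) (lC x))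
  refine ⟨P'', mP'', lP'', ?_⟩
  have key := energy_refine hW (P := fun x => Nat.pair (P x) (P' x))
    (hpair.comp (hP.prodMk hP')) (P' := fun x => Nat.pair (P x) (P'' x))
    (hpair.comp (hP.prodMk mP'')) (fun x => hlt (hB x) (lP'' x))
    (h := fun c => Nat.pair c.unpair.1 c.unpair.2.unpair.1) (fun x => by simp [hP'']) hA hC
    (iA := fun c => (c.unpair.2.unpair.2.unpair.1 : ℝ))
    (iB := fun c => (c.unpair.2.unpair.2.unpair.2 : ℝ))
    (fun x => by by_cases h : x ∈ A <;> simp [hP'', hcA, h])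
    (fun x => by by_cases h : x ∈ C <;> simp [hP'', hcC, h])
  have := sq_lt_sq' (by linarith [abs_nonneg (∫ z in A ×ˢ C,
    resid W (fun x => Nat.pair (P x) (P' x)) z ∂lam2)]) hAC
  rw [sq_abs] at this
  linarith

/-- Energy increment argument. At most `j` energy drops by `ε ^ 2` are possible, and the resulting
bound `N` does not depend on the kernel or on the partitions. -/
lemma regularize_aux {ε : ℝ} (hε : 0 < ε) (B j : ℕ) : ∀ b : ℕ, ∃ N : ℕ, ∀ (W : ℝ × ℝ → ℝ)
    (P P' : ℝ → ℕ), IsKernel W → Measurable P → Measurable P' → (∀ x, P x < B) →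
    (∀ x, P' x < b) → energy W (fun x => Nat.pair (P x) (P' x)) ≤ j * ε ^ 2 →
    ∃ P'' : ℝ → ℕ, Measurable P'' ∧ (∀ x, P'' x < N) ∧
      CutRegular ε W (fun x => Nat.pair (P x) (P'' x)) := by
  induction j with
  | zero =>
    intro b
    refine ⟨b, fun W P P' hW hP hP' hB hb hE => ⟨P', hP', hb, ?_⟩⟩
    by_contra hreg
    obtain ⟨P'', -, -, h⟩ := exists_energy_drop hε hW hP hP' hB hb hreg
    have := energy_nonneg W (fun x => Nat.pair (P x) (P'' x))
    push_cast at hE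
    nlinarith [pow_pos hε 2]
  | succ j ih =>
    intro b
    obtain ⟨N, hN⟩ := ih (Nat.pair b (Nat.pair 2 2))
    refine ⟨max b N, fun W P P' hW hP hP' hB hb hE => ?_⟩
    by_cases hreg : CutRegular ε W fun x => Nat.pair (P x) (P' x)
    · exact ⟨P', hP', fun x => lt_max_of_lt_left (hb x), hreg⟩
    · obtain ⟨P₁, m1, l1, h⟩ := exists_energy_drop hε hW hP hP' hB hb hreg
      push_cast at hE
      obtain ⟨P₂, m2, l2, h2⟩ := hN W P P₁ hW hP m1 hB l1 (by linarith)
      exact ⟨P₂, m2, fun x => lt_max_of_lt_right (l2 x), h2⟩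

/-- Weak regularity lemma relative to a given partition `P` with at most `B` classes: some `P'`
with at most `N` classes, `N` depending only on `ε` and `B`, makes the common refinement regular. -/
lemma regularize {ε : ℝ} (hε : 0 < ε) (B : ℕ) : ∃ N : ℕ, ∀ (W : ℝ × ℝ → ℝ)
    (P : ℝ → ℕ), IsKernel W → Measurable P → (∀ x, P x < B) →
    ∃ P' : ℝ → ℕ, Measurable P' ∧ (∀ x, P' x < N) ∧
      CutRegular ε W (fun x => Nat.pair (P x) (P' x)) := by
  obtain ⟨j, hj⟩ := exists_nat_gt (1 / ε ^ 2)
  obtain ⟨N, hN⟩ := regularize_aux hε B j 1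
  refine ⟨N, fun W P hW hP hB => hN W P 0 hW hP measurable_const hB (by simp) ?_⟩
  have hpair : Measurable fun q : ℕ × ℕ => Nat.pair q.1 q.2 := measurable_of_countable _
  refine (energy_le_one hW (hpair.comp (hP.prodMk measurable_const))).trans ?_
  rw [div_lt_iff₀ (by positivity)] at hj
  exact hj.le

/-- Iterated regularity: starting from the partition `c`, there are successive refinements `R k`
whose `(k + 1)`-st member is regular up to `1 / (k + 1)`, with class bounds `B k` and `N k` common
to all kernels. -/
theorem exists_regular_tower (B₀ : ℕ) : ∃ N : ℕ → ℕ, ∃ B : ℕ → ℕ, B 0 = B₀ ∧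
    (∀ k, B (k + 1) = Nat.pair (B k) (N k)) ∧ ∀ (W : ℝ × ℝ → ℝ) (c : ℝ → ℕ), IsKernel W →
    Measurable c → (∀ x, c x < B₀) → ∃ R R' : ℕ → ℝ → ℕ, R 0 = c ∧
      (∀ k, Measurable (R k)) ∧ (∀ k, Measurable (R' k)) ∧ (∀ k x, R k x < B k) ∧
      (∀ k x, R' k x < N k) ∧ (∀ k x, R (k + 1) x = Nat.pair (R k x) (R' k x)) ∧
      ∀ k : ℕ, CutRegular (1 / ((k : ℝ) + 1)) W (R (k + 1)) := by
  have hpos : ∀ k : ℕ, (0 : ℝ) < 1 / ((k : ℝ) + 1) := fun k => by positivity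
  choose N hN using fun k : ℕ => fun B : ℕ => regularize (hpos k) B
  let B : ℕ → ℕ := fun k => Nat.rec B₀ (fun k b => Nat.pair b (N k b)) k
  refine ⟨fun k => N k (B k), B, rfl, fun k => rfl, fun W c hW hc hlt => ?_⟩
  have hpair : Measurable fun q : ℕ × ℕ => Nat.pair q.1 q.2 := measurable_of_countable _
  choose! f hf1 hf2 hf3 using fun (k : ℕ) (P : ℝ → ℕ) (h : Measurable P ∧ ∀ x, P x < B k) =>
    hN k (B k) W P hW h.1 h.2
  let R : ℕ → ℝ → ℕ := fun k => Nat.rec c (fun k P => fun x => Nat.pair (P x) (f k P x)) k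
  have hR : ∀ k, Measurable (R k) ∧ ∀ x, R k x < B k := by
    intro k
    induction k with
    | zero => exact ⟨hc, hlt⟩
    | succ k ih =>
      exact ⟨hpair.comp (ih.1.prodMk (hf1 k _ ih)), fun x =>
        (Nat.pair_lt_pair_left _ (ih.2 x)).trans (Nat.pair_lt_pair_right _ (hf2 k _ ih x))⟩
  exact ⟨R, fun k => f k (R k), rfl, fun k => (hR k).1, fun k => hf1 k _ (hR k),
    fun k => (hR k).2, fun k => hf2 k _ (hR k), fun k x => rfl, fun k => hf3 k _ (hR k)⟩

/-! ### Splitting sets and matching words -/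

/-- Lebesgue measure has no atoms: `t ↦ λ (A ∩ (-∞, t])` is continuous and takes every
intermediate value. -/
lemma exists_subset_real_eq {A : Set ℝ} (hA : MeasurableSet A) {t : ℝ} (h0 : 0 ≤ t)
    (ht : t ≤ lam.real A) : ∃ A' ⊆ A, MeasurableSet A' ∧ lam.real A' = t := by
  set F : ℝ → ℝ := fun x => lam.real (A ∩ Iic x) with hF
  have hmono : ∀ x y, x ≤ y → F x ≤ F y := fun x y hxy =>
    measureReal_mono (inter_subset_inter_right _ (Iic_subset_Iic.2 hxy))
  have hlip : ∀ x y, x ≤ y → F y ≤ F x + (y - x) := by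
    intro x y hxy
    have h1 : A ∩ Iic y ⊆ (A ∩ Iic x) ∪ Ioc x y := by
      rintro z ⟨hz, hzy⟩
      by_cases h : z ≤ x
      · exact Or.inl ⟨hz, h⟩
      · exact Or.inr ⟨not_le.1 h, hzy⟩
    have h2 : lam.real (Ioc x y) ≤ y - x := by
      refine ENNReal.toReal_le_of_le_ofReal (by linarith) ?_
      exact (Measure.restrict_apply_le _ _).trans (by simp)
    calc F y ≤ lam.real ((A ∩ Iic x) ∪ Ioc x y) := measureReal_mono h1
      _ ≤ F x + lam.real (Ioc x y) := measureReal_union_le _ _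
      _ ≤ _ := by linarith
  have hcont : Continuous F := by
    refine (LipschitzWith.of_dist_le_mul (K := 1) fun x y => ?_).continuous
    rw [Real.dist_eq, Real.dist_eq, NNReal.coe_one, one_mul]
    rcases le_total x y with h | h
    · rw [abs_sub_comm, abs_of_nonneg (sub_nonneg.2 (hmono x y h)), abs_sub_comm,
        abs_of_nonneg (sub_nonneg.2 h)]
      linarith [hlip x y h]
    · rw [abs_of_nonneg (sub_nonneg.2 (hmono y x h)), abs_of_nonneg (sub_nonneg.2 h)]
      linarith [hlip y x h]
  have F0 : F 0 ≤ 0 := by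
    have : lam (A ∩ Iic 0) = 0 := by
      refine measure_mono_null inter_subset_right ?_
      rw [Measure.restrict_apply measurableSet_Iic]
      refine measure_mono_null (t := {0}) ?_ (by simp)
      rintro x ⟨h1, h2⟩
      exact le_antisymm h1 h2.1
    simp [hF, measureReal_def, this]
  have F1 : lam.real A ≤ F 1 := by
    have : lam (A ∩ Iic 1) = lam A := by
      rw [Measure.restrict_apply (hA.inter measurableSet_Iic), Measure.restrict_apply hA]
      congr 1
      ext x
      simp only [I01, mem_inter_iff, mem_Iic, mem_Icc]
      tauto
    simp [hF, measureReal_def, this]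
  obtain ⟨x, -, hx⟩ := intermediate_value_Icc (zero_le_one (α := ℝ)) hcont.continuousOn
    ⟨F0.trans h0, ht.trans F1⟩
  exact ⟨A ∩ Iic x, inter_subset_left, hA.inter measurableSet_Iic, hx⟩

/-- A measurable set can be split into `N + 1` pieces of prescribed measures. -/
lemma exists_subdivision (N : ℕ) : ∀ {A : Set ℝ}, MeasurableSet A → ∀ v : ℕ → ℝ,
    (∀ j, 0 ≤ v j) → ∑ j ∈ Finset.range (N + 1), v j = lam.real A →
    ∃ q : ℝ → ℕ, Measurable q ∧ (∀ x, q x < N + 1) ∧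
      ∀ j < N + 1, lam.real (A ∩ q ⁻¹' {j}) = v j := by
  induction N with
  | zero =>
    intro A hA v hv hs
    refine ⟨fun _ => 0, measurable_const, by simp, fun j hj => ?_⟩
    obtain rfl : j = 0 := by omega
    simpa using hs.symm
  | succ N ih =>
    intro A hA v hv hs
    rw [Finset.sum_range_succ] at hs
    have hnn : 0 ≤ ∑ j ∈ Finset.range (N + 1), v j := Finset.sum_nonneg fun j _ => hv j
    obtain ⟨A', hsub, mA', hA'⟩ := exists_subset_real_eq hA (hv (N + 1)) (by linarith)
    obtain ⟨q, mq, lq, hq⟩ := ih (hA.diff mA') v hv (by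
      rw [measureReal_sdiff hsub mA', hA']
      linarith)
    classical
    refine ⟨A'.piecewise (fun _ => N + 1) q, measurable_const.piecewise mA' mq, fun x => ?_,
      fun j hj => ?_⟩
    · by_cases hx : x ∈ A'
      · simp [hx]
      · simpa [hx] using (lq x).trans (Nat.lt_succ_self _)
    · rcases Nat.lt_succ_iff_lt_or_eq.1 hj with h | rfl
      · rw [← hq j h]
        congr 1
        ext x
        by_cases hx : x ∈ A'
        · simp [hx]
          omega
        · simp [hx]
      · rw [← hA']
        congr 1
        ext x
        by_cases hx : x ∈ A'
        · simp [hx, hsub hx]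
        · simpa [hx] using fun _ => (lq x).ne

/-- A partition can be refined so that the new classes have prescribed measures. -/
lemma exists_refinement {Q : ℝ → ℕ} (hQ : Measurable Q) {N : ℕ} (v : ℕ → ℕ → ℝ)
    (hN : 0 < N) (hv : ∀ a j, 0 ≤ v a j) (hs : ∀ a, ∑ j ∈ Finset.range N, v a j = mass Q a) :
    ∃ Q' : ℝ → ℕ, Measurable Q' ∧ (∀ x, Q' x < N) ∧
      ∀ a, ∀ j < N, mass (fun x => Nat.pair (Q x) (Q' x)) (Nat.pair a j) = v a j := by
  obtain ⟨N, rfl⟩ : ∃ M, N = M + 1 := ⟨N - 1, by omega⟩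
  choose q mq lq hq using fun a => exists_subdivision N
    (hQ (measurableSet_singleton a)) (v a) (hv a) (hs a)
  refine ⟨fun x => q (Q x) x, ?_, fun x => lq _ x, fun a j hj => ?_⟩
  · exact (measurable_from_prod_countable_right (f := fun p : ℕ × ℝ => q p.1 p.2) mq).comp
      (hQ.prodMk measurable_id)
  · rw [← hq a j hj, mass]
    congr 1
    ext x
    simp only [mem_preimage, mem_singleton_iff, Nat.pair_eq_pair, mem_inter_iff]
    constructor
    · rintro ⟨rfl, h⟩
      exact ⟨rfl, h⟩
    · rintro ⟨rfl, h⟩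
      exact ⟨rfl, h⟩

/-- Two words of equal length can be aligned by a permutation with at most as many mismatches as
the total discrepancy of their letter counts. A permutation minimising the number of mismatches
works. -/
lemma exists_perm_matching {n B : ℕ} (r q : Fin n → ℕ) (hr : ∀ i, r i < B) :
    ∃ π : Equiv.Perm (Fin n), ((Finset.univ.filter fun i => r i ≠ q (π i)).card : ℝ) ≤
      ∑ a ∈ Finset.range B, |((Finset.univ.filter fun i => r i = a).card : ℝ) -
        (Finset.univ.filter fun i => q i = a).card| := by
  classical
  obtain ⟨π, -, hπ⟩ := Finset.exists_min_image (Finset.univ : Finset (Equiv.Perm (Fin n)))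
    (fun π => (Finset.univ.filter fun i => r i ≠ q (π i)).card) ⟨1, Finset.mem_univ _⟩
  refine ⟨π, ?_⟩
  have hsum : (Finset.univ.filter fun i => r i ≠ q (π i)).card =
      ∑ a ∈ Finset.range B, (Finset.univ.filter fun i => r i = a ∧ r i ≠ q (π i)).card := by
    rw [Finset.card_eq_sum_card_fiberwise (f := r) (t := Finset.range B)
      (fun i _ => by simpa using hr i)]
    refine Finset.sum_congr rfl fun a _ => ?_
    rw [Finset.filter_filter]
    congr 1
    ext i
    simp [and_comm]
  rw [hsum]
  push_cast
  refine Finset.sum_le_sum fun a _ => ?_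
  have hqcard : (Finset.univ.filter fun i => q i = a).card =
      (Finset.univ.filter fun i => q (π i) = a).card := by
    refine (Finset.card_bij (fun i _ => π i) ?_ ?_ ?_).symm
    · intro i hi
      simpa using hi
    · intro i _ j _ h
      exact π.injective h
    · intro j hj
      exact ⟨π.symm j, by simpa using hj, by simp⟩
  have hrs : (Finset.univ.filter fun i => r i = a).card =
      (Finset.univ.filter fun i => r i = a ∧ r i ≠ q (π i)).card +
      (Finset.univ.filter fun i => r i = a ∧ q (π i) = a).card := by
    rw [← Finset.card_filter_add_card_filter_not (s := Finset.univ.filter fun i => r i = a)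
      (fun i => r i ≠ q (π i)), Finset.filter_filter, Finset.filter_filter]
    congr 2
    ext i
    simp only [Finset.mem_filter, Finset.mem_univ, true_and, not_not]
    constructor
    · rintro ⟨h1, h2⟩
      exact ⟨h1, h2 ▸ h1⟩
    · rintro ⟨h1, h2⟩
      exact ⟨h1, h1.trans h2.symm⟩
  by_cases h1 : ∃ i, r i = a ∧ r i ≠ q (π i)
  · -- Exchanging a letter `a` of `q` placed against another letter with position `i` would lower
    -- the number of mismatches.
    have h2 : ∀ j, q (π j) = a → r j = a := by
      by_contra hcon
      push Not at hcon
      obtain ⟨j, hj, hja⟩ := hcon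
      obtain ⟨i, hi, hia⟩ := h1
      refine absurd (hπ (Equiv.swap i j |>.trans π) (Finset.mem_univ _)) (not_le.2 ?_)
      refine Finset.card_lt_card ⟨?_, ?_⟩
      · intro l hl
        have hl := (Finset.mem_filter.1 hl).2
        refine Finset.mem_filter.2 ⟨Finset.mem_univ _, ?_⟩
        rw [Equiv.trans_apply] at hl
        by_cases hli : l = i
        · exact hli ▸ hia
        by_cases hlj : l = j
        · rw [hlj, hj]; exact hja
        · rwa [Equiv.swap_apply_of_ne_of_ne hli hlj] at hl
      · intro hsub
        have := (Finset.mem_filter.1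
          (hsub (Finset.mem_filter.2 ⟨Finset.mem_univ i, hia⟩))).2
        rw [Equiv.trans_apply, Equiv.swap_apply_left] at this
        exact this (hi.trans hj.symm)
    have h3 : (Finset.univ.filter fun i => r i = a ∧ q (π i) = a) =
        Finset.univ.filter fun i => q (π i) = a := by
      ext i
      simp only [Finset.mem_filter, Finset.mem_univ, true_and]
      exact ⟨fun h => h.2, fun h => ⟨h2 i h, h⟩⟩
    rw [hqcard, hrs, h3]
    push_cast
    rw [add_sub_cancel_right]
    exact le_abs_self _
  · have : (Finset.univ.filter fun i => r i = a ∧ r i ≠ q (π i)) = ∅ := by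
      ext i
      simpa using fun h h' => h1 ⟨i, h, h'⟩
    rw [this]
    simp

/-! ### Matching partitions by measure preserving bijections -/

/-- The `i`-th of the `n` half-open intervals of length `1 / n` that make up `[0, 1)`. -/
def blk (n : ℕ) (i : Fin n) : Set ℝ := Ico ((i : ℝ) / n) (((i : ℝ) + 1) / n)

lemma measurableSet_blk (n : ℕ) (i : Fin n) : MeasurableSet (blk n i) := measurableSet_Ico

lemma mem_blk_iff {n : ℕ} (i : Fin n) (x : ℝ) :
    x ∈ blk n i ↔ 0 ≤ x ∧ ⌊(n : ℝ) * x⌋₊ = i := by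
  have hn : (0 : ℝ) < n := by exact_mod_cast i.pos
  rw [blk, mem_Ico, div_le_iff₀ hn, lt_div_iff₀ hn]
  constructor
  · rintro ⟨h1, h2⟩
    have hx : 0 ≤ x * n := le_trans (Nat.cast_nonneg _) h1
    have hx0 : 0 ≤ x := nonneg_of_mul_nonneg_left hx hn
    refine ⟨hx0, ?_⟩
    rw [Nat.floor_eq_iff (by positivity)]
    constructor <;> linarith
  · rintro ⟨h1, h2⟩
    rw [Nat.floor_eq_iff (by positivity)] at h2
    constructor <;> linarith

lemma blk_unique {n : ℕ} {i j : Fin n} {x : ℝ} (hi : x ∈ blk n i) (hj : x ∈ blk n j) : i = j :=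
  Fin.ext (((mem_blk_iff i x).1 hi).2.symm.trans ((mem_blk_iff j x).1 hj).2)

lemma iUnion_blk {n : ℕ} (hn : 0 < n) : ⋃ i, blk n i = Ico (0 : ℝ) 1 := by
  have hn' : (0 : ℝ) < n := by exact_mod_cast hn
  ext x
  simp only [mem_iUnion, mem_blk_iff, mem_Ico]
  constructor
  · rintro ⟨i, h0, hi⟩
    refine ⟨h0, ?_⟩
    have h1 : ⌊(n : ℝ) * x⌋₊ < n := hi ▸ i.2
    rw [Nat.floor_lt (by positivity)] at h1
    nlinarith
  · rintro ⟨h0, h1⟩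
    have h1 : ⌊(n : ℝ) * x⌋₊ < n := by
      rw [Nat.floor_lt (by positivity)]
      nlinarith
    exact ⟨⟨_, h1⟩, h0, rfl⟩

lemma lam_eq_Ico : lam = volume.restrict (Ico (0 : ℝ) 1) :=
  (Measure.restrict_congr_set Ico_ae_eq_Icc).symm

lemma lam_compl_iUnion_blk {n : ℕ} (hn : 0 < n) : lam (⋃ i, blk n i)ᶜ = 0 := by
  rw [iUnion_blk hn, lam_eq_Ico, Measure.restrict_apply measurableSet_Ico.compl]
  simp

lemma lam_eq_sum {n : ℕ} (hn : 0 < n) {s : Set ℝ} (hs : MeasurableSet s) :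
    lam s = ∑ i, volume (s ∩ blk n i) := by
  rw [lam_eq_Ico, Measure.restrict_apply hs, ← iUnion_blk hn, inter_iUnion,
    measure_iUnion, tsum_fintype]
  · intro i j hij
    exact Set.disjoint_left.2 fun x hx hx' => hij (blk_unique hx.2 hx'.2)
  · exact fun i => hs.inter (measurableSet_blk n i)

lemma lam_real_blk {n : ℕ} (i : Fin n) : lam.real (blk n i) = 1 / n := by
  have hn : (0 : ℝ) < n := by exact_mod_cast i.pos
  have hsub : blk n i ⊆ Ico (0 : ℝ) 1 := iUnion_blk i.pos ▸ subset_iUnion _ i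
  rw [lam_eq_Ico, measureReal_restrict_apply (measurableSet_blk n i), inter_eq_left.2 hsub,
    blk, Real.volume_real_Ico_of_le (by gcongr; linarith)]
  ring

lemma lam_real_biUnion_blk {n : ℕ} (F : Finset (Fin n)) :
    lam.real (⋃ i ∈ F, blk n i) = F.card / n := by
  rw [measureReal_biUnion_finset]
  · simp [lam_real_blk, div_eq_mul_inv]
  · intro i _ j _ hij
    exact Set.disjoint_left.2 fun x hx hx' => hij (blk_unique hx hx')
  · exact fun i _ => measurableSet_blk n i

/-- The piecewise translation of the line that carries the block `i` onto the block `π i` and fixes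
everything outside `[0, 1)`. -/
def blockPerm {n : ℕ} (π : Equiv.Perm (Fin n)) (x : ℝ) : ℝ :=
  x + ∑ i, (blk n i).indicator (fun _ => (((π i : ℕ) : ℝ) - ((i : ℕ) : ℝ)) / n) x

lemma blockPerm_of_mem {n : ℕ} (π : Equiv.Perm (Fin n)) {i : Fin n} {x : ℝ}
    (hx : x ∈ blk n i) : blockPerm π x = x + (((π i : ℕ) : ℝ) - ((i : ℕ) : ℝ)) / n := by
  rw [blockPerm, Finset.sum_eq_single i]
  · simp [hx]
  · intro j _ hj
    exact indicator_of_notMem (fun h => hj (blk_unique h hx)) _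
  · simp

lemma blockPerm_of_notMem {n : ℕ} (π : Equiv.Perm (Fin n)) {x : ℝ}
    (hx : ∀ i, x ∉ blk n i) : blockPerm π x = x := by
  rw [blockPerm, Finset.sum_eq_zero fun j _ => indicator_of_notMem (hx j) _, add_zero]

lemma add_mem_blk {n : ℕ} (i j : Fin n) (x : ℝ) :
    x + (((j : ℕ) : ℝ) - ((i : ℕ) : ℝ)) / n ∈ blk n j ↔ x ∈ blk n i := by
  simp only [blk, mem_Ico, sub_div, add_div]
  constructor <;> rintro ⟨h1, h2⟩ <;> constructor <;> linarith

lemma blockPerm_mem {n : ℕ} (π : Equiv.Perm (Fin n)) {i : Fin n} {x : ℝ}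
    (hx : x ∈ blk n i) : blockPerm π x ∈ blk n (π i) := by
  rw [blockPerm_of_mem π hx]
  exact (add_mem_blk i (π i) x).2 hx

lemma blockPerm_symm_apply {n : ℕ} (π : Equiv.Perm (Fin n)) (x : ℝ) :
    blockPerm π.symm (blockPerm π x) = x := by
  by_cases h : ∃ i, x ∈ blk n i
  · obtain ⟨i, hi⟩ := h
    rw [blockPerm_of_mem π.symm (blockPerm_mem π hi), blockPerm_of_mem π hi]
    simp
    ring
  · push Not at h
    rw [blockPerm_of_notMem π h, blockPerm_of_notMem _ h]

lemma measurable_blockPerm {n : ℕ} (π : Equiv.Perm (Fin n)) : Measurable (blockPerm π) :=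
  measurable_id.add (Finset.measurable_sum _ fun i _ =>
    measurable_const.indicator (measurableSet_blk n i))

lemma mapsTo_blockPerm {n : ℕ} (hn : 0 < n) (π : Equiv.Perm (Fin n)) :
    MapsTo (blockPerm π) I01 I01 := by
  intro x hx
  by_cases h : ∃ i, x ∈ blk n i
  · obtain ⟨i, hi⟩ := h
    have h1 : blockPerm π x ∈ ⋃ i, blk n i := mem_iUnion.2 ⟨_, blockPerm_mem π hi⟩
    rw [iUnion_blk hn] at h1
    exact ⟨h1.1, h1.2.le⟩
  · push Not at h
    rwa [blockPerm_of_notMem π h]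

lemma isMPB_blockPerm {n : ℕ} (hn : 0 < n) (π : Equiv.Perm (Fin n)) : IsMPB (blockPerm π) := by
  refine ⟨measurable_blockPerm π, ?_, measurable_blockPerm π, ?_⟩
  · refine BijOn.mk (mapsTo_blockPerm hn π) ?_ ?_
    · intro x _ y _ h
      rw [← blockPerm_symm_apply π x, h, blockPerm_symm_apply]
    · intro y hy
      refine ⟨blockPerm π.symm y, mapsTo_blockPerm hn _ hy, ?_⟩
      simpa using blockPerm_symm_apply π.symm y
  · ext s hs
    rw [Measure.map_apply (measurable_blockPerm π) hs, lam_eq_sum hn (measurable_blockPerm π hs),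
      lam_eq_sum hn hs,
      ← Equiv.sum_comp π fun i => volume (s ∩ blk n i)]
    refine Finset.sum_congr rfl fun i _ => ?_
    rw [← measure_preimage_add_right volume ((((π i : ℕ) : ℝ) - ((i : ℕ) : ℝ)) / n)
      (s ∩ blk n (π i))]
    congr 1
    ext x
    simp only [mem_inter_iff, mem_preimage, add_mem_blk]
    refine and_congr_left fun hx => ?_
    rw [blockPerm_of_mem π hx]

/-- The points of the blocks at which `R` differs from the function with value `r i` on block `i`. -/
def badSet (R : ℝ → ℕ) {n : ℕ} (r : Fin n → ℕ) : Set ℝ := ⋃ i, blk n i ∩ {x | R x ≠ r i}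

lemma measurableSet_badSet {R : ℝ → ℕ} (hR : Measurable R) {n : ℕ} (r : Fin n → ℕ) :
    MeasurableSet (badSet R r) :=
  MeasurableSet.iUnion fun i => (measurableSet_blk n i).inter
    (hR (measurableSet_singleton (r i)).compl)

/-- A partition agrees, off a set of measure at most `ε`, with one that is constant on each of `n`
equal blocks, for every large `n`. -/
lemma exists_block_approx {R : ℝ → ℕ} (hR : Measurable R) {B : ℕ} (hB : ∀ x, R x < B) {ε : ℝ}
    (hε : 0 < ε) : ∃ N : ℕ, ∀ n ≥ N, 0 < n → ∃ r : Fin n → ℕ, (∀ i, r i < B) ∧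
      lam.real (badSet R r) ≤ ε := by
  have hB0 : 0 < B := (Nat.zero_le _).trans_lt (hB 0)
  have hf : Integrable (fun x => (R x : ℝ)) lam := by
    refine integrable_of_bdd (by fun_prop) B fun x => ?_
    rw [Nat.abs_cast]
    exact_mod_cast (hB x).le
  -- `R` is approximated in `L¹` by a uniformly continuous `g`; rounding `g` at the left end of a block
  -- recovers `R` wherever `|R - g| < 1 / 4`, and Markov's inequality bounds the remaining points.
  obtain ⟨g, hgs, hg, hgc, hgi⟩ := hf.exists_hasCompactSupport_integral_sub_le
    (show 0 < ε / 4 by positivity)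
  obtain ⟨δ, hδ, hgu⟩ := Metric.uniformContinuous_iff.1
    (hgs.uniformContinuous_of_continuous hgc) (1 / 4) (by norm_num)
  obtain ⟨N, hN⟩ := exists_nat_gt (1 / δ)
  refine ⟨N, fun n hnN hn => ⟨fun i => min ⌊g ((i : ℝ) / n) + 1 / 2⌋₊ (B - 1),
    fun i => (min_le_right _ _).trans_lt (by omega), ?_⟩⟩
  have hn' : (0 : ℝ) < n := by exact_mod_cast hn
  have hsub : badSet R (fun i : Fin n => min ⌊g ((i : ℝ) / n) + 1 / 2⌋₊ (B - 1)) ⊆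
      {x | 1 / 4 ≤ ‖(R x : ℝ) - g x‖} := by
    intro x hx
    obtain ⟨i, hi, hne⟩ := mem_iUnion.1 hx
    by_contra hlt
    rw [mem_ofPred_eq, not_le, Real.norm_eq_abs] at hlt
    refine hne ?_
    show R x = min ⌊g ((i : ℝ) / n) + 1 / 2⌋₊ (B - 1)
    have hd : dist x ((i : ℝ) / n) < δ := by
      rw [Real.dist_eq, abs_of_nonneg (sub_nonneg.2 hi.1)]
      have h1 : x < (i : ℝ) / n + 1 / n := by
        rw [← add_div]
        exact hi.2
      have h2 : 1 / (n : ℝ) < δ := by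
        rw [div_lt_iff₀ hn']
        rw [div_lt_iff₀ hδ] at hN
        have : (N : ℝ) ≤ n := by exact_mod_cast hnN
        nlinarith
      linarith
    have hg2 := hgu hd
    rw [Real.dist_eq] at hg2
    rw [abs_lt] at hlt hg2
    have hfl : ⌊g ((i : ℝ) / n) + 1 / 2⌋₊ = R x := by
      have h0 : (0 : ℝ) ≤ R x := Nat.cast_nonneg _
      rw [Nat.floor_eq_iff (by linarith)]
      constructor <;> linarith
    rw [hfl, min_eq_left]
    have := hB x
    omega
  have hmk := mul_meas_ge_le_integral_of_nonneg (μ := lam)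
    (f := fun x => ‖(R x : ℝ) - g x‖) (ae_of_all _ fun x => norm_nonneg _) (hf.sub hgi).norm (1 / 4)
  have := measureReal_mono (μ := lam) hsub
  linarith

lemma abs_mass_sub_card_le {R : ℝ → ℕ} {n : ℕ} (hn : 0 < n) (r : Fin n → ℕ) (a : ℕ) :
    |mass R a - ((Finset.univ.filter fun i => r i = a).card : ℝ) / n| ≤
      lam.real (badSet R r) := by
  rw [← lam_real_biUnion_blk, mass, abs_le]
  have hz : lam.real (⋃ i, blk n i)ᶜ = 0 := by
    rw [measureReal_def, lam_compl_iUnion_blk hn, ENNReal.toReal_zero]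
  constructor
  · have hsub : (⋃ i ∈ Finset.univ.filter (fun i => r i = a), blk n i) ⊆
        R ⁻¹' {a} ∪ badSet R r := by
      intro x hx
      simp only [Finset.mem_filter, Finset.mem_univ, true_and, mem_iUnion] at hx
      obtain ⟨i, hi, hx⟩ := hx
      by_cases h : R x = a
      · exact Or.inl h
      · exact Or.inr (mem_iUnion.2 ⟨i, hx, fun h' => h (h'.trans hi)⟩)
    have := (measureReal_mono (μ := lam) hsub).trans (measureReal_union_le _ _)
    linarith
  · have hsub : R ⁻¹' {a} ⊆ ((⋃ i ∈ Finset.univ.filter (fun i => r i = a), blk n i) ∪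
        badSet R r) ∪ (⋃ i, blk n i)ᶜ := by
      intro x hx
      by_cases h : x ∈ ⋃ i, blk n i
      · left
        obtain ⟨i, hi⟩ := mem_iUnion.1 h
        by_cases hr : r i = a
        · left
          simp only [Finset.mem_filter, Finset.mem_univ, true_and, mem_iUnion]
          exact ⟨i, hr, hi⟩
        · exact Or.inr (mem_iUnion.2 ⟨i, hi, fun h' => hr (h'.symm.trans hx)⟩)
      · exact Or.inr h
    have h1 := (measureReal_mono (μ := lam) hsub).trans (measureReal_union_le _ _)
    have h2 := measureReal_union_le (μ := lam)
      (⋃ i ∈ Finset.univ.filter (fun i => r i = a), blk n i) (badSet R r)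
    linarith

/-- Two partitions with nearly equal class measures are nearly carried to each other by a measure
preserving bijection, namely a permutation of short blocks. -/
theorem exists_mpb_matching {R Q : ℝ → ℕ} (hR : Measurable R) (hQ : Measurable Q) {B : ℕ}
    (hRB : ∀ x, R x < B) (hQB : ∀ x, Q x < B) {ε : ℝ} (hε : 0 < ε) :
    ∃ σ, IsMPB σ ∧ lam.real {x | R x ≠ Q (σ x)} ≤
      ∑ a ∈ Finset.range B, |mass R a - mass Q a| + ε := by
  set η : ℝ := ε / (2 * B + 2) with hη
  have hη0 : 0 < η := by positivity
  obtain ⟨N₁, h1⟩ := exists_block_approx hR hRB hη0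
  obtain ⟨N₂, h2⟩ := exists_block_approx hQ hQB hη0
  set n := max (max N₁ N₂) 1 with hndef
  have hn : 0 < n := by omega
  have hn' : (0 : ℝ) < n := by exact_mod_cast hn
  obtain ⟨r, hr, hrb⟩ := h1 n (by omega) hn
  obtain ⟨q, hq, hqb⟩ := h2 n (by omega) hn
  obtain ⟨π, hπ⟩ := exists_perm_matching r q hr
  have hσ := isMPB_blockPerm hn π
  refine ⟨blockPerm π, hσ, ?_⟩
  have hz : lam.real (⋃ i, blk n i)ᶜ = 0 := by
    rw [measureReal_def, lam_compl_iUnion_blk hn, ENNReal.toReal_zero]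
  have hpre : lam.real (blockPerm π ⁻¹' badSet Q q) = lam.real (badSet Q q) := by
    rw [measureReal_def, measureReal_def,
      hσ.2.2.measure_preimage (measurableSet_badSet hQ q).nullMeasurableSet]
  have hsub : {x | R x ≠ Q (blockPerm π x)} ⊆ ((badSet R r ∪ blockPerm π ⁻¹' badSet Q q) ∪
      (⋃ i ∈ Finset.univ.filter (fun i => r i ≠ q (π i)), blk n i)) ∪ (⋃ i, blk n i)ᶜ := by
    intro x hx
    by_cases h : x ∈ ⋃ i, blk n i
    · left
      obtain ⟨i, hi⟩ := mem_iUnion.1 h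
      by_cases hri : r i = q (π i)
      · left
        by_cases hRx : R x = r i
        · right
          exact mem_iUnion.2 ⟨π i, blockPerm_mem π hi, fun h' => hx (by rw [hRx, hri, ← h'])⟩
        · exact Or.inl (mem_iUnion.2 ⟨i, hi, hRx⟩)
      · right
        simp only [Finset.mem_filter, Finset.mem_univ, true_and, mem_iUnion]
        exact ⟨i, hri, hi⟩
    · exact Or.inr h
  have e1 := (measureReal_mono (μ := lam) hsub).trans (measureReal_union_le _ _)
  have e2 := measureReal_union_le (μ := lam) (badSet R r ∪ blockPerm π ⁻¹' badSet Q q)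
    (⋃ i ∈ Finset.univ.filter (fun i => r i ≠ q (π i)), blk n i)
  have e3 := measureReal_union_le (μ := lam) (badSet R r) (blockPerm π ⁻¹' badSet Q q)
  rw [lam_real_biUnion_blk] at e2
  have e4 : ((Finset.univ.filter fun i => r i ≠ q (π i)).card : ℝ) / n ≤
      ∑ a ∈ Finset.range B, (|mass R a - mass Q a| + 2 * η) := by
    refine (div_le_div_of_nonneg_right hπ hn'.le).trans ?_
    rw [Finset.sum_div]
    refine Finset.sum_le_sum fun a _ => ?_
    have f1 := abs_le.1 (abs_mass_sub_card_le (R := R) hn r a)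
    have f2 := abs_le.1 (abs_mass_sub_card_le (R := Q) hn q a)
    have f3 := abs_le.1 (le_refl |mass R a - mass Q a|)
    rw [← abs_of_pos hn', ← abs_div, sub_div, abs_le]
    constructor <;> linarith
  rw [Finset.sum_add_distrib, Finset.sum_const, Finset.card_range, nsmul_eq_mul] at e4
  have e5 : B * (2 * η) + 2 * η = ε := by
    rw [hη]
    field_simp
  linarith

/-! ### Limit statistics and the limit graphon -/

lemma setIntegral_cell_refine {R R' : ℝ → ℕ} (hR : Measurable R) (hR' : Measurable R') {N : ℕ}
    (hN : ∀ x, R' x < N) {f : ℝ × ℝ → ℝ} (hf : Integrable f lam2) (a b : ℕ) :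
    ∫ z in cell R a b, f z ∂lam2 = ∑ j ∈ Finset.range N, ∑ l ∈ Finset.range N,
      ∫ z in cell (fun x => Nat.pair (R x) (R' x)) (Nat.pair a j) (Nat.pair b l), f z ∂lam2 := by
  rw [← Finset.sum_product', setIntegral_sum_fibers (p := fun z : ℝ × ℝ => (R' z.1, R' z.2))
    (by fun_prop) (Finset.range N ×ˢ Finset.range N) (measurableSet_cell hR a b) (by simp [hN]) hf]
  refine Finset.sum_congr rfl fun i _ => ?_
  congr 2
  ext z
  simp [cell, Prod.ext_iff]
  tauto

lemma mass_refine {R R' : ℝ → ℕ} (hR : Measurable R) (hR' : Measurable R') {N : ℕ}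
    (hN : ∀ x, R' x < N) (a : ℕ) :
    mass R a = ∑ j ∈ Finset.range N, mass (fun x => Nat.pair (R x) (R' x)) (Nat.pair a j) := by
  have h := setIntegral_sum_fibers (m := lam) hR' (Finset.range N)
    (hR (measurableSet_singleton a)) (by simp [hN]) (integrable_const (1 : ℝ))
  simp only [integral_const, smul_eq_mul, mul_one, measureReal_restrict_apply_univ] at h
  rw [mass, h]
  refine Finset.sum_congr rfl fun i _ => ?_
  rw [mass]
  congr 1
  ext x
  simp

/-- Consistent statistics of a tower of partitions with a kernel on it: `ν k a` plays the role of the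
measure of class `a` at level `k`, and `ρ k a b` that of the kernel integral over the cell `(a, b)`.
The class `Nat.pair a j` at level `k + 1` lies inside the class `a` at level `k`. -/
structure TowerStats (B N : ℕ → ℕ) (ν : ℕ → ℕ → ℝ) (ρ : ℕ → ℕ → ℕ → ℝ) : Prop where
  B_zero_pos : 0 < B 0
  N_pos : ∀ k, 0 < N k
  B_succ : ∀ k, B (k + 1) = Nat.pair (B k) (N k)
  ν_nonneg : ∀ k a, 0 ≤ ν k a
  ν_zero : ∀ a, B 0 ≤ a → ν 0 a = 0
  ν_succ_zero : ∀ k a j, N k ≤ j → ν (k + 1) (Nat.pair a j) = 0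
  ν_total : ∑ a ∈ Finset.range (B 0), ν 0 a = 1
  ν_refine : ∀ k a, ν k a = ∑ j ∈ Finset.range (N k), ν (k + 1) (Nat.pair a j)
  ρ_nonneg : ∀ k a b, 0 ≤ ρ k a b
  ρ_le : ∀ k a b, ρ k a b ≤ ν k a * ν k b
  ρ_symm : ∀ k a b, ρ k a b = ρ k b a
  ρ_refine : ∀ k a b, ρ k a b = ∑ j ∈ Finset.range (N k), ∑ l ∈ Finset.range (N k),
    ρ (k + 1) (Nat.pair a j) (Nat.pair b l)

section Stats

variable {B N : ℕ → ℕ} {ν : ℕ → ℕ → ℝ} {ρ : ℕ → ℕ → ℕ → ℝ}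

/-- The class measures of a consistent system are realised by a tower of partitions of `[0,1]`. -/
lemma TowerStats.exists_tower (h : TowerStats B N ν ρ) : ∃ Q Q' : ℕ → ℝ → ℕ,
    (∀ k, Measurable (Q k)) ∧ (∀ k, Measurable (Q' k)) ∧ (∀ k x, Q k x < B k) ∧
    (∀ k x, Q' k x < N k) ∧ (∀ k, Q (k + 1) = fun x => Nat.pair (Q k x) (Q' k x)) ∧
    ∀ k a, mass (Q k) a = ν k a := by
  have hpair : Measurable fun q : ℕ × ℕ => Nat.pair q.1 q.2 := measurable_of_countable _
  obtain ⟨M, hM⟩ : ∃ M, B 0 = M + 1 := ⟨B 0 - 1, by have := h.B_zero_pos; omega⟩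
  obtain ⟨Q₀, m0, l0, hQ₀⟩ := exists_subdivision M MeasurableSet.univ (ν 0) (h.ν_nonneg 0)
    (by rw [← hM, h.ν_total, probReal_univ])
  rw [← hM] at l0 hQ₀
  have hQ₀' : ∀ a, mass Q₀ a = ν 0 a := by
    intro a
    by_cases ha : a < B 0
    · simpa [mass] using hQ₀ a ha
    · rw [h.ν_zero a (not_lt.1 ha), mass_eq_zero l0 (not_lt.1 ha)]
  choose! f hf1 hf2 hf3 using
    fun (k : ℕ) (Q : ℝ → ℕ) (hQ : Measurable Q ∧ (∀ x, Q x < B k) ∧ ∀ a, mass Q a = ν k a) =>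
      exists_refinement hQ.1 (fun a j => ν (k + 1) (Nat.pair a j)) (h.N_pos k)
        (fun a j => h.ν_nonneg _ _) (fun a => by rw [← h.ν_refine, hQ.2.2])
  let Q : ℕ → ℝ → ℕ := fun k => Nat.rec Q₀ (fun k P => fun x => Nat.pair (P x) (f k P x)) k
  have hQ : ∀ k, Measurable (Q k) ∧ (∀ x, Q k x < B k) ∧ ∀ a, mass (Q k) a = ν k a := by
    intro k
    induction k with
    | zero => exact ⟨m0, l0, hQ₀'⟩
    | succ k ih =>
      refine ⟨hpair.comp (ih.1.prodMk (hf1 k _ ih)), fun x => ?_, fun c => ?_⟩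
      · rw [h.B_succ]
        exact (Nat.pair_lt_pair_left _ (ih.2.1 x)).trans (Nat.pair_lt_pair_right _ (hf2 k _ ih x))
      · rw [← Nat.pair_unpair c]
        by_cases hc : c.unpair.2 < N k
        · exact hf3 k _ ih _ _ hc
        · rw [h.ν_succ_zero k _ _ (not_lt.1 hc)]
          have : Q (k + 1) ⁻¹' {Nat.pair c.unpair.1 c.unpair.2} = ∅ := by
            ext x
            simp only [mem_preimage, mem_singleton_iff, mem_empty_iff_false, iff_false]
            intro hx
            have h2 : f k (Q k) x = c.unpair.2 := (Nat.pair_eq_pair.1 hx).2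
            have := hf2 k _ ih x
            omega
          rw [mass, this, measureReal_empty]
  exact ⟨Q, fun k => f k (Q k), fun k => (hQ k).1, fun k => hf1 k _ (hQ k), fun k => (hQ k).2.1,
    fun k => hf2 k _ (hQ k), fun k => rfl, fun k => (hQ k).2.2⟩

/-- Density of the cell `(a, b)` at level `k` prescribed by the statistics; `0` on null cells. -/
def dens (ν : ℕ → ℕ → ℝ) (ρ : ℕ → ℕ → ℕ → ℝ) (k a b : ℕ) : ℝ := ρ k a b / (ν k a * ν k b)

lemma TowerStats.dens_mul (h : TowerStats B N ν ρ) (k a b : ℕ) :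
    dens ν ρ k a b * (ν k a * ν k b) = ρ k a b :=
  div_mul_cancel_of_le (h.ρ_nonneg k a b) (h.ρ_le k a b)

lemma TowerStats.dens_nonneg (h : TowerStats B N ν ρ) (k a b : ℕ) : 0 ≤ dens ν ρ k a b :=
  div_nonneg (h.ρ_nonneg k a b) (mul_nonneg (h.ν_nonneg k a) (h.ν_nonneg k b))

lemma TowerStats.dens_le_one (h : TowerStats B N ν ρ) (k a b : ℕ) : dens ν ρ k a b ≤ 1 :=
  div_le_one_of_le₀ (h.ρ_le k a b) (mul_nonneg (h.ν_nonneg k a) (h.ν_nonneg k b))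

lemma TowerStats.dens_symm (h : TowerStats B N ν ρ) (k a b : ℕ) :
    dens ν ρ k a b = dens ν ρ k b a := by
  rw [dens, dens, h.ρ_symm, mul_comm]

/-- The step functions given by the densities form a bounded martingale for the filtration generated
by the tower, hence converge almost everywhere. -/
lemma TowerStats.ae_tendsto (h : TowerStats B N ν ρ) {Q Q' : ℕ → ℝ → ℕ}
    (mQ : ∀ k, Measurable (Q k)) (mQ' : ∀ k, Measurable (Q' k)) (lQ : ∀ k x, Q k x < B k)
    (lQ' : ∀ k x, Q' k x < N k) (hQ : ∀ k, Q (k + 1) = fun x => Nat.pair (Q k x) (Q' k x))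
    (hν : ∀ k a, mass (Q k) a = ν k a) :
    ∀ᵐ z ∂lam2, ∃ c, Tendsto (fun k => dens ν ρ k (Q k z.1) (Q k z.2)) atTop (nhds c) := by
  set M : ℕ → ℝ × ℝ → ℝ := fun k z => dens ν ρ k (Q k z.1) (Q k z.2) with hM
  set p : ℕ → ℝ × ℝ → ℕ × ℕ := fun k z => (Q k z.1, Q k z.2) with hp
  have mp : ∀ k, Measurable (p k) := fun k => by fun_prop
  let 𝒢 : Filtration ℕ (inferInstance : MeasurableSpace (ℝ × ℝ)) :=
    { seq := fun k => MeasurableSpace.comap (p k) inferInstance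
      mono' := by
        refine monotone_nat_of_le_succ fun k => ?_
        have : p k = (fun q : ℕ × ℕ => (q.1.unpair.1, q.2.unpair.1)) ∘ p (k + 1) := by
          ext z <;> simp [hp, hQ k]
        rw [this, ← MeasurableSpace.comap_comp]
        exact MeasurableSpace.comap_mono (measurable_of_countable _).comap_le
      le' := fun k => (mp k).comap_le }
  have hInt : ∀ k, Integrable (M k) lam2 := fun k => integrable_step (mQ k) (lQ k) _
  have hcell : ∀ k a b, ∫ z in cell (Q k) a b, M k z ∂lam2 = ρ k a b := fun k a b => by
    rw [hM]
    simp only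
    rw [setIntegral_cell_step (mQ k) (dens ν ρ k), hν, hν, h.dens_mul]
  have hmart : Martingale M 𝒢 lam2 := by
    refine martingale_of_setIntegral_eq_succ (fun k => ?_) hInt ?_
    · have : M k = (fun q : ℕ × ℕ => dens ν ρ k q.1 q.2) ∘ p k := rfl
      rw [this]
      exact ((measurable_of_countable _).comp (comap_measurable (p k))).stronglyMeasurable
    · rintro k s ⟨T, -, rfl⟩
      have hF : ∀ z ∈ p k ⁻¹' T, p k z ∈ Finset.range (B k) ×ˢ Finset.range (B k) := by
        intro z _
        simp [hp, lQ]
      have hs : MeasurableSet (p k ⁻¹' T) := mp k (Set.to_countable T).measurableSet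
      rw [setIntegral_sum_fibers (mp k) _ hs hF (hInt k),
        setIntegral_sum_fibers (mp k) _ hs hF (hInt (k + 1))]
      refine Finset.sum_congr rfl fun i _ => ?_
      by_cases hi : i ∈ T
      · have : p k ⁻¹' T ∩ p k ⁻¹' {i} = cell (Q k) i.1 i.2 := by
          rw [← preimage_inter, inter_eq_right.2 (singleton_subset_iff.2 hi)]
          ext z
          simp [cell, hp, Prod.ext_iff]
        rw [this, hcell, setIntegral_cell_refine (mQ k) (mQ' k) (lQ' k) (hInt (k + 1)),
          h.ρ_refine, ← hQ]
        simp only [hcell]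
      · have : p k ⁻¹' T ∩ p k ⁻¹' {i} = ∅ := by
          rw [← preimage_inter, inter_singleton_eq_empty.2 hi, preimage_empty]
        simp [this]
  refine hmart.submartingale.exists_ae_tendsto_of_bdd (R := 1) fun k => ?_
  refine (eLpNorm_le_of_ae_bound (C := 1) (ae_of_all _ fun z => ?_)).trans (by simp)
  rw [Real.norm_eq_abs, abs_of_nonneg (h.dens_nonneg _ _ _)]
  exact h.dens_le_one _ _ _

/-- Consistent statistics come from a graphon in the limit: on a tower `Q` realising `ν`, the density
step functions converge in `L¹` to a graphon `U`. -/
theorem TowerStats.exists_graphon (h : TowerStats B N ν ρ) : ∃ (Q Q' : ℕ → ℝ → ℕ) (U : Graphon),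
    (∀ k, Measurable (Q k)) ∧ (∀ k x, Q k x < B k) ∧
    (∀ k, Q (k + 1) = fun x => Nat.pair (Q k x) (Q' k x)) ∧ (∀ k a, mass (Q k) a = ν k a) ∧
    Tendsto (fun k => ∫ z, |dens ν ρ k (Q k z.1) (Q k z.2) - U.W z.1 z.2| ∂lam2)
      atTop (nhds 0) := by
  obtain ⟨Q, Q', mQ, mQ', lQ, lQ', hQ, hν⟩ := h.exists_tower
  set M : ℕ → ℝ × ℝ → ℝ := fun k z => dens ν ρ k (Q k z.1) (Q k z.2) with hM
  have mM : ∀ k, Measurable (M k) := fun k => measurable_step (mQ k) _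
  have bdd1 : ∀ z, IsBoundedUnder (· ≤ ·) atTop fun k => M k z := fun z =>
    isBoundedUnder_of ⟨1, fun k => h.dens_le_one _ _ _⟩
  have bdd0 : ∀ z, IsBoundedUnder (· ≥ ·) atTop fun k => M k z := fun z =>
    isBoundedUnder_of ⟨0, fun k => h.dens_nonneg _ _ _⟩
  -- The upper limit is symmetric, measurable and `[0,1]`-valued everywhere, not just almost everywhere.
  let U : Graphon :=
    { W := fun x y => limsup (fun k => M k (x, y)) atTop
      measurable := by
        change Measurable fun z : ℝ × ℝ => limsup (fun k => M k z) atTop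
        exact Measurable.limsup mM
      symm := fun x y => by
        congr 1
        ext k
        exact h.dens_symm _ _ _
      nonneg := fun x y => le_limsup_of_frequently_le
        (Frequently.of_forall fun k => h.dens_nonneg _ _ _) (bdd1 (x, y))
      le_one := fun x y => limsup_le_of_le (bdd0 (x, y)).isCoboundedUnder_le
        (Eventually.of_forall fun k => h.dens_le_one _ _ _) }
  refine ⟨Q, Q', U, mQ, lQ, hQ, hν, ?_⟩
  have hU : Measurable fun z : ℝ × ℝ => U.W z.1 z.2 := U.measurable
  have key := tendsto_integral_of_dominated_convergence (μ := lam2)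
    (F := fun k z => |M k z - U.W z.1 z.2|) (f := fun _ => 0) (fun _ => 1)
    (fun k => ((mM k).sub hU).abs.aestronglyMeasurable) (integrable_const _)
    (fun k => ae_of_all _ fun z => ?_) ?_
  · simpa using key
  · have h1 : 0 ≤ M k z := h.dens_nonneg _ _ _
    have h2 : M k z ≤ 1 := h.dens_le_one _ _ _
    have h3 := U.nonneg z.1 z.2
    have h4 := U.le_one z.1 z.2
    rw [Real.norm_eq_abs, abs_abs, abs_le]
    constructor <;> linarith
  · filter_upwards [h.ae_tendsto mQ mQ' lQ lQ' hQ hν] with z ⟨c, hc⟩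
    have hUc : U.W z.1 z.2 = c := hc.limsup_eq
    rw [hUc]
    have := (hc.sub_const c).abs
    simpa using this

end Stats

/-! ### Estimates for the colored cut distance -/

lemma Graphon.isKernel (K : Graphon) : IsKernel fun z : ℝ × ℝ => K.W z.1 z.2 :=
  ⟨K.measurable, fun _ => K.nonneg _ _, fun _ => K.le_one _ _⟩

lemma Graphon.cellInt_symm (K : Graphon) (P : ℝ → ℕ) (a b : ℕ) :
    cellInt (fun z => K.W z.1 z.2) P a b = cellInt (fun z => K.W z.1 z.2) P b a := by
  rw [cellInt, cellInt, cell, cell, ← setIntegral_prod_swap]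
  simp only [Prod.fst_swap, Prod.snd_swap, K.symm]

lemma cutNorm_le {U : ℝ → ℝ → ℝ} (hU : Integrable (fun z : ℝ × ℝ => U z.1 z.2) lam2) {c : ℝ}
    (hc : 0 ≤ c) (h : ∀ A B : Set ℝ, MeasurableSet A → MeasurableSet B →
      |∫ z in A ×ˢ B, U z.1 z.2 ∂lam2| ≤ c) : cutNorm U ≤ c := by
  refine Real.sSup_le ?_ hc
  rintro r ⟨A, B, hA, hB, hA1, hB1, rfl⟩
  convert h A B hA hB using 2
  rw [setIntegral_prod _ hU.integrableOn, Measure.restrict_restrict_of_subset hA1,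
    Measure.restrict_restrict_of_subset hB1]

/-- The difference `W - U ∘ σ` is telescoped through the averages of `W` over `R` and through the step
functions of `D` on `R` and on `Q ∘ σ`. Only the first difference needs the cut norm; the others are
bounded in `L¹`. -/
lemma cut_estimate {W U : ℝ × ℝ → ℝ} (hW : IsKernel W) (hU : IsKernel U) {R Q : ℝ → ℕ}
    (mR : Measurable R) (mQ : Measurable Q) {n : ℕ} (lR : ∀ x, R x < n) (lQ : ∀ x, Q x < n)
    {σ : ℝ → ℝ} (hσ : IsMPB σ) {D : ℕ → ℕ → ℝ} (D0 : ∀ a b, 0 ≤ D a b) (D1 : ∀ a b, D a b ≤ 1)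
    {ε : ℝ} (hreg : CutRegular ε W R) {A B : Set ℝ} (hA : MeasurableSet A)
    (hB : MeasurableSet B) :
    |∫ z in A ×ˢ B, (W z - U (σ z.1, σ z.2)) ∂lam2| ≤ ε +
      ∑ a ∈ Finset.range n, ∑ b ∈ Finset.range n,
        |cellInt W R a b - D a b * (mass R a * mass R b)| +
      2 * lam.real {x | R x ≠ Q (σ x)} + ∫ z, |D (Q z.1) (Q z.2) - U z| ∂lam2 := by
  set E₁ : ℝ × ℝ → ℝ := fun z => avg W R (R z.1) (R z.2) - D (R z.1) (R z.2) with hE₁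
  set E₂ : ℝ × ℝ → ℝ := fun z => D (R z.1) (R z.2) - D (Q (σ z.1)) (Q (σ z.2)) with hE₂
  set E₃' : ℝ × ℝ → ℝ := fun z => D (Q z.1) (Q z.2) - U z with hE₃'
  set E₃ : ℝ × ℝ → ℝ := fun z => E₃' (σ z.1, σ z.2) with hE₃
  have mQσ : Measurable fun x => Q (σ x) := mQ.comp hσ.1
  have iR : Integrable (resid W R) lam2 :=
    integrable_of_bdd (measurable_resid hW mR) 1 (abs_resid_le hW R)
  have i1 : Integrable E₁ lam2 := integrable_step mR lR fun a b => avg W R a b - D a b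
  have i2 : Integrable E₂ lam2 := (integrable_step mR lR D).sub
    (integrable_step mQσ (fun x => lQ (σ x)) D)
  have i3' : Integrable E₃' lam2 := (integrable_step mQ lQ D).sub hU.integrable
  have hσ2 : MeasurePreserving (Prod.map σ σ) lam2 lam2 := hσ.2.2.prod hσ.2.2
  have i3 : Integrable E₃ lam2 := hσ2.integrable_comp_of_integrable i3'
  have hsplit : ∀ z, W z - U (σ z.1, σ z.2) = resid W R z + (E₁ z + E₂ z + E₃ z) := by
    intro z
    simp only [resid, hE₁, hE₂, hE₃, hE₃']
    ring
  have iE : Integrable (fun z => E₁ z + E₂ z + E₃ z) lam2 := (i1.add i2).add i3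
  simp only [hsplit]
  rw [integral_add iR.integrableOn iE.integrableOn]
  have b1 : ∫ z, |E₁ z| ∂lam2 = ∑ a ∈ Finset.range n, ∑ b ∈ Finset.range n,
      |cellInt W R a b - D a b * (mass R a * mass R b)| := by
    rw [hE₁, integral_step mR lR fun a b => |avg W R a b - D a b|]
    refine Finset.sum_congr rfl fun a _ => Finset.sum_congr rfl fun b _ => ?_
    rw [← avg_mul hW, ← sub_mul, abs_mul,
      abs_of_nonneg (mul_nonneg (mass_nonneg R a) (mass_nonneg R b))]
  have b2 : ∫ z, |E₂ z| ∂lam2 ≤ 2 * lam.real {x | R x ≠ Q (σ x)} := by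
    set s : Set ℝ := {x | R x ≠ Q (σ x)} with hs
    have ms : MeasurableSet s := (measurableSet_eq_fun mR mQσ).compl
    have is : Integrable (s.indicator (fun _ => (1 : ℝ))) lam := (integrable_const 1).indicator ms
    have j1 : Integrable (fun z : ℝ × ℝ => s.indicator (fun _ => (1 : ℝ)) z.1) lam2 :=
      is.comp_fst lam
    have j2 : Integrable (fun z : ℝ × ℝ => s.indicator (fun _ => (1 : ℝ)) z.2) lam2 :=
      is.comp_snd lam
    have hle : ∫ z, |E₂ z| ∂lam2 ≤ ∫ z : ℝ × ℝ, (s.indicator (fun _ => (1 : ℝ)) z.1 +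
        s.indicator (fun _ => (1 : ℝ)) z.2) ∂lam2 := by
      refine integral_mono i2.abs (j1.add j2) fun z => ?_
      have habs : |E₂ z| ≤ 1 := by
        have := D0 (R z.1) (R z.2)
        have := D1 (R z.1) (R z.2)
        have := D0 (Q (σ z.1)) (Q (σ z.2))
        have := D1 (Q (σ z.1)) (Q (σ z.2))
        rw [hE₂, abs_le]
        constructor <;> simp only <;> linarith
      by_cases h1 : z.1 ∈ s
      · by_cases h2 : z.2 ∈ s
        · simp [h1, h2]
          linarith
        · simpa [h1, h2] using habs
      · by_cases h2 : z.2 ∈ s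
        · simpa [h1, h2] using habs
        · have e1 : R z.1 = Q (σ z.1) := not_not.1 h1
          have e2 : R z.2 = Q (σ z.2) := not_not.1 h2
          simp [h1, h2, hE₂, e1, e2]
    rw [integral_add j1 j2, integral_fun_fst, integral_fun_snd, integral_indicator ms] at hle
    simp only [probReal_univ, integral_const, measureReal_restrict_apply_univ,
      smul_eq_mul, mul_one] at hle
    linarith
  have b3 : ∫ z, |E₃ z| ∂lam2 = ∫ z, |E₃' z| ∂lam2 := by
    have := integral_map (μ := lam2) hσ2.measurable.aemeasurable (f := fun z => |E₃' z|)
      (by rw [hσ2.map_eq]; exact i3'.abs.aestronglyMeasurable)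
    rw [hσ2.map_eq] at this
    exact this.symm
  have b4 : |∫ z in A ×ˢ B, (E₁ z + E₂ z + E₃ z) ∂lam2| ≤
      ∫ z, |E₁ z| ∂lam2 + ∫ z, |E₂ z| ∂lam2 + ∫ z, |E₃ z| ∂lam2 := by
    refine abs_integral_le_integral_abs.trans ?_
    refine (setIntegral_le_integral iE.abs (ae_of_all _ fun z => abs_nonneg _)).trans ?_
    have i12 : Integrable (fun z => |E₁ z| + |E₂ z|) lam2 := i1.abs.add i2.abs
    rw [← integral_add i1.abs i2.abs, ← integral_add i12 i3.abs]
    exact integral_mono iE.abs (i12.add i3.abs) fun z => abs_add_three _ _ _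
  have b5 := hreg A B hA hB
  have b6 := abs_add_le (∫ z in A ×ˢ B, resid W R z ∂lam2)
    (∫ z in A ×ˢ B, (E₁ z + E₂ z + E₃ z) ∂lam2)
  linarith

lemma colorDist_le {S : Type*} [Fintype S] {c c' : ℝ → S} {s : Set ℝ}
    (h : ∀ x, x ∉ s → c x = c' x) : colorDist c c' ≤ Fintype.card S * lam.real s := by
  have : ∀ t : S, (volume ((I01 ∩ c ⁻¹' {t}) ∆ (I01 ∩ c' ⁻¹' {t}))).toReal ≤ lam.real s := by
    intro t
    have h1 : (I01 ∩ c ⁻¹' {t}) ∆ (I01 ∩ c' ⁻¹' {t}) ⊆ I01 ∩ s := by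
      intro x hx
      rw [mem_symmDiff] at hx
      simp only [mem_inter_iff, mem_preimage, mem_singleton_iff] at hx
      refine ⟨by tauto, ?_⟩
      by_contra hxs
      rw [h x hxs] at hx
      tauto
    refine ENNReal.toReal_mono (measure_ne_top _ _) ?_
    rw [← Measure.restrict_eq_self volume (h1.trans inter_subset_left)]
    exact measure_mono (h1.trans inter_subset_right)
  refine (Finset.sum_le_sum fun t _ => this t).trans ?_
  simp

lemma colorDist_nonneg {S : Type*} [Fintype S] (c c' : ℝ → S) : 0 ≤ colorDist c c' :=
  Finset.sum_nonneg fun _ _ => ENNReal.toReal_nonneg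

lemma cutNorm_nonneg (U : ℝ → ℝ → ℝ) : 0 ≤ cutNorm U :=
  Real.sSup_nonneg (by rintro r ⟨A, B, -, -, -, -, rfl⟩; exact abs_nonneg _)

lemma deltaCutS_nonneg {S : Type*} [Fintype S] (W W' : CGraphon S) : 0 ≤ deltaCutS W W' :=
  Real.sInf_nonneg (by
    rintro r ⟨σ, -, rfl⟩
    exact add_nonneg (cutNorm_nonneg _) (colorDist_nonneg _ _))

lemma deltaCutS_le {S : Type*} [Fintype S] (W W' : CGraphon S) {σ : ℝ → ℝ} (hσ : IsMPB σ) :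
    deltaCutS W W' ≤ cutNorm (fun x y => W.K.W x y - W'.K.W (σ x) (σ y))
        + colorDist W.c fun y => W'.c (σ y) :=
  csInf_le ⟨0, by
    rintro r ⟨σ, -, rfl⟩
    exact add_nonneg (cutNorm_nonneg _) (colorDist_nonneg _ _)⟩ ⟨σ, hσ, rfl⟩

/-- Colored cut distance bounded by finitely many statistics of the partitions `R` and `Q`, provided
equal classes carry equal colors. -/
theorem deltaCutS_estimate {S : Type*} [Fintype S] (W W' : CGraphon S) {R Q : ℝ → ℕ}
    (mR : Measurable R) (mQ : Measurable Q) {n : ℕ} (lR : ∀ x, R x < n) (lQ : ∀ x, Q x < n)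
    (hcol : ∀ x y, R x = Q y → W.c x = W'.c y)
    {D : ℕ → ℕ → ℝ} (D0 : ∀ a b, 0 ≤ D a b) (D1 : ∀ a b, D a b ≤ 1)
    {ε : ℝ} (hreg : CutRegular ε (fun z => W.K.W z.1 z.2) R) :
    deltaCutS W W' ≤ ε +
      ∑ a ∈ Finset.range n, ∑ b ∈ Finset.range n,
        |cellInt (fun z => W.K.W z.1 z.2) R a b - D a b * (mass R a * mass R b)| +
      (2 + Fintype.card S) * ∑ a ∈ Finset.range n, |mass R a - mass Q a| +
      ∫ z, |D (Q z.1) (Q z.2) - W'.K.W z.1 z.2| ∂lam2 := by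
  refine le_of_forall_pos_le_add fun θ hθ => ?_
  set C : ℝ := 2 + Fintype.card S with hC
  have hC0 : 0 < C := by positivity
  obtain ⟨σ, hσ, hm⟩ := exists_mpb_matching mR mQ lR lQ (show 0 < θ / C by positivity)
  have hest := fun (A B : Set ℝ) (hA : MeasurableSet A) (hB : MeasurableSet B) =>
    cut_estimate W.K.isKernel W'.K.isKernel mR mQ lR lQ hσ D0 D1 hreg hA hB
  have hInt : Integrable (fun z : ℝ × ℝ => W.K.W z.1 z.2 - W'.K.W (σ z.1) (σ z.2)) lam2 :=
    W.K.isKernel.integrable.sub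
      ((hσ.2.2.prod hσ.2.2).integrable_comp_of_integrable W'.K.isKernel.integrable)
  have h1 := cutNorm_le (U := fun x y => W.K.W x y - W'.K.W (σ x) (σ y)) hInt
    ((abs_nonneg _).trans (hest _ _ MeasurableSet.empty MeasurableSet.empty)) hest
  have h2 := colorDist_le (c := W.c) (c' := fun y => W'.c (σ y)) (s := {x | R x ≠ Q (σ x)})
    fun x hx => hcol x (σ x) (not_not.1 hx)
  have h3 := deltaCutS_le W W' hσ
  have h4 : C * lam.real {x | R x ≠ Q (σ x)} ≤
      C * ∑ a ∈ Finset.range n, |mass R a - mass Q a| + θ := by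
    refine (mul_le_mul_of_nonneg_left hm hC0.le).trans (le_of_eq ?_)
    field_simp
  have h5 : C * lam.real {x | R x ≠ Q (σ x)} = 2 * lam.real {x | R x ≠ Q (σ x)} +
    Fintype.card S * lam.real {x | R x ≠ Q (σ x)} := by rw [hC]; ring
  linarith

/-- Diagonal extraction, as sequential compactness of a countable power of `[0,1]`. -/
lemma exists_subseq_stats (ν : ℕ → ℕ → ℕ → ℝ) (ρ : ℕ → ℕ → ℕ → ℕ → ℝ)
    (hν : ∀ n k a, ν n k a ∈ Icc (0 : ℝ) 1) (hρ : ∀ n k a b, ρ n k a b ∈ Icc (0 : ℝ) 1) :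
    ∃ (φ : ℕ → ℕ) (ν₀ : ℕ → ℕ → ℝ) (ρ₀ : ℕ → ℕ → ℕ → ℝ), StrictMono φ ∧
      (∀ k a, Tendsto (fun n => ν (φ n) k a) atTop (nhds (ν₀ k a))) ∧
      ∀ k a b, Tendsto (fun n => ρ (φ n) k a b) atTop (nhds (ρ₀ k a b)) := by
  let x : ℕ → ((ℕ × ℕ) ⊕ (ℕ × ℕ × ℕ)) → ℝ := fun n =>
    Sum.elim (fun p => ν n p.1 p.2) (fun p => ρ n p.1 p.2.1 p.2.2)
  obtain ⟨y, -, φ, hφ, hy⟩ := (isCompact_univ_pi (X := fun _ : (ℕ × ℕ) ⊕ (ℕ × ℕ × ℕ) => ℝ)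
    fun _ => isCompact_Icc (a := (0 : ℝ)) (b := 1)).tendsto_subseq (x := x) fun n => by
      rintro (p | p) -
      · exact hν _ _ _
      · exact hρ _ _ _ _
  rw [tendsto_pi_nhds] at hy
  exact ⟨φ, fun k a => y (.inl (k, a)), fun k a b => y (.inr (k, a, b)), hφ,
    fun k a => hy (.inl (k, a)), fun k a b => hy (.inr (k, a, b))⟩

/-! ### Compactness -/

/-- **Compactness of the space of `S`-colored graphons.** Every sequence of `S`-colored
graphons has a subsequence converging in the colored cut distance `δ_□^S` to some
`S`-colored graphon; i.e. the quotient space `(𝒲_S/∼, δ_□^S)` is compact. -/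
theorem colored_graphon_space_compact
    {S : Type*} [Fintype S] (W : ℕ → CGraphon S) :
    ∃ (φ : ℕ → ℕ) (W₀ : CGraphon S), StrictMono φ ∧
      Tendsto (fun k => deltaCutS (W (φ k)) W₀) atTop (nhds 0) := by
  classical
  let e : S ≃ Fin (Fintype.card S) := Fintype.equivFin S
  set col : ℕ → ℝ → ℕ := fun n x => (e ((W n).c x) : ℕ) with hcol
  have mcol : ∀ n, Measurable (col n) := fun n => by
    refine measurable_to_countable fun x => ?_
    convert (W n).measC ((W n).c x) using 1
    ext y
    simp [hcol, Fin.val_inj]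
  have lcol : ∀ n x, col n x < Fintype.card S := fun n x => (e _).2
  set w : ℕ → ℝ × ℝ → ℝ := fun n z => (W n).K.W z.1 z.2 with hw
  have hker : ∀ n, IsKernel (w n) := fun n => (W n).K.isKernel
  obtain ⟨N, B, hB0, hBs, htower⟩ := exists_regular_tower (Fintype.card S)
  choose R R' hR0 mR mR' lR lR' hRs hreg using fun n =>
    htower (w n) (col n) (hker n) (mcol n) (lcol n)
  have hRs' : ∀ n k, R n (k + 1) = fun x => Nat.pair (R n k x) (R' n k x) :=
    fun n k => funext (hRs n k)
  -- Along a subsequence all class measures and all cell integrals converge.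
  obtain ⟨φ, ν, ρ, hφ, hν, hρ⟩ := exists_subseq_stats (fun n k a => mass (R n k) a)
    (fun n k a b => cellInt (w n) (R n k) a b)
    (fun n k a => ⟨mass_nonneg _ _, mass_le_one _ _⟩)
    (fun n k a b => ⟨cellInt_nonneg (hker n) _ _ _, (cellInt_le (hker n) _ _ _).trans
      (mul_le_one₀ (mass_le_one _ _) (mass_nonneg _ _) (mass_le_one _ _))⟩)
  -- The consistency relations are closed conditions, so they pass to the limit.
  have hstats : TowerStats B N ν ρ :=
    { B_zero_pos := hB0 ▸ (Nat.zero_le _).trans_lt (lcol 0 0)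
      N_pos := fun k => (Nat.zero_le _).trans_lt (lR' 0 k 0)
      B_succ := hBs
      ν_nonneg := fun k a => ge_of_tendsto' (hν k a) fun n => mass_nonneg _ _
      ν_zero := fun a ha => by
        refine tendsto_nhds_unique (hν 0 a) ?_
        simp only [mass_eq_zero (lR _ 0) ha]
        exact tendsto_const_nhds
      ν_succ_zero := fun k a j hj => by
        refine tendsto_nhds_unique (hν (k + 1) (Nat.pair a j)) ?_
        have : ∀ n, mass (R n (k + 1)) (Nat.pair a j) = 0 := fun n => by
          have : R n (k + 1) ⁻¹' {Nat.pair a j} = ∅ := by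
            ext x
            have := lR' n k x
            simp only [mem_preimage, mem_singleton_iff, mem_empty_iff_false, iff_false, hRs,
              Nat.pair_eq_pair]
            omega
          rw [mass, this, measureReal_empty]
        simp only [this]
        exact tendsto_const_nhds
      ν_total := by
        refine tendsto_nhds_unique (tendsto_finsetSum _ fun a _ => hν 0 a) ?_
        have : ∀ n, ∑ a ∈ Finset.range (B 0), mass (R n 0) a = 1 := fun n => by
          have h := setIntegral_sum_fibers (m := lam) (mR n 0) (Finset.range (B 0))
            MeasurableSet.univ (by simp [lR]) (integrable_const (1 : ℝ))
          simp only [integral_const, smul_eq_mul, mul_one, measureReal_restrict_apply_univ,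
            univ_inter, probReal_univ] at h
          exact h.symm
        simp only [this]
        exact tendsto_const_nhds
      ν_refine := fun k a => by
        refine tendsto_nhds_unique (hν k a) ?_
        have : ∀ n, mass (R n k) a =
            ∑ j ∈ Finset.range (N k), mass (R n (k + 1)) (Nat.pair a j) := fun n => by
          rw [mass_refine (mR n k) (mR' n k) (lR' n k), hRs']
        simp only [this]
        exact tendsto_finsetSum _ fun j _ => hν _ _
      ρ_nonneg := fun k a b => ge_of_tendsto' (hρ k a b) fun n => cellInt_nonneg (hker _) _ _ _
      ρ_le := fun k a b => le_of_tendsto_of_tendsto' (hρ k a b) ((hν k a).mul (hν k b))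
        fun n => cellInt_le (hker _) _ _ _
      ρ_symm := fun k a b => by
        refine tendsto_nhds_unique (hρ k a b) ((hρ k b a).congr fun n => ?_)
        exact (W (φ n)).K.cellInt_symm _ _ _
      ρ_refine := fun k a b => by
        refine tendsto_nhds_unique (hρ k a b) ?_
        have : ∀ n, cellInt (w n) (R n k) a b = ∑ j ∈ Finset.range (N k),
            ∑ l ∈ Finset.range (N k),
              cellInt (w n) (R n (k + 1)) (Nat.pair a j) (Nat.pair b l) := fun n => by
          simp only [cellInt]
          rw [setIntegral_cell_refine (mR n k) (mR' n k) (lR' n k) (hker n).integrable, hRs']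
        simp only [this]
        exact tendsto_finsetSum _ fun j _ => tendsto_finsetSum _ fun l _ => hρ _ _ _ }
  obtain ⟨Q, Q', U, mQ, lQ, hQs, hQν, hL⟩ := hstats.exists_graphon
  have lQ0 : ∀ x, Q 0 x < Fintype.card S := fun x => hB0 ▸ lQ 0 x
  let W₀ : CGraphon S :=
    { K := U
      c := fun x => e.symm ⟨Q 0 x, lQ0 x⟩
      measC := fun s => by
        convert mQ 0 (measurableSet_singleton (e s : ℕ)) using 1
        ext x
        simp [Equiv.symm_apply_eq, Fin.ext_iff] }
  -- The bottom level of both towers is the coloring, and every level determines the bottom one.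
  have hcolor : ∀ n k x y, R n k x = Q k y → (W n).c x = W₀.c y := by
    intro n k x y
    induction k with
    | zero =>
      intro h
      rw [hR0] at h
      exact (Equiv.eq_symm_apply e).2 (Fin.ext h)
    | succ k ih =>
      intro h
      rw [hRs, hQs] at h
      exact ih (Nat.pair_eq_pair.1 h).1
  refine ⟨φ, W₀, hφ, ?_⟩
  have hest := fun n k => deltaCutS_estimate (W (φ n)) W₀ (mR (φ n) (k + 1)) (mQ (k + 1))
    (lR _ _) (lQ _) (hcolor _ _) (hstats.dens_nonneg (k + 1)) (hstats.dens_le_one (k + 1))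
    (hreg (φ n) k)
  rw [Metric.tendsto_atTop']
  intro δ hδ
  have hk : Tendsto (fun k : ℕ => 1 / ((k : ℝ) + 1) + ∫ z, |dens ν ρ (k + 1) (Q (k + 1) z.1)
      (Q (k + 1) z.2) - U.W z.1 z.2| ∂lam2) atTop (nhds (0 + 0)) :=
    tendsto_one_div_add_atTop_nhds_zero_nat.add ((tendsto_add_atTop_iff_nat 1).2 hL)
  rw [add_zero] at hk
  -- The level `k` is fixed first, depending on `δ` only; the remaining terms vanish as `n → ∞`.
  obtain ⟨k, hk⟩ := (hk.eventually_lt_const (half_pos hδ)).exists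
  have hn : Tendsto (fun n => ∑ a ∈ Finset.range (B (k + 1)), ∑ b ∈ Finset.range (B (k + 1)),
      |cellInt (w (φ n)) (R (φ n) (k + 1)) a b - dens ν ρ (k + 1) a b *
        (mass (R (φ n) (k + 1)) a * mass (R (φ n) (k + 1)) b)| +
      (2 + Fintype.card S) * ∑ a ∈ Finset.range (B (k + 1)),
        |mass (R (φ n) (k + 1)) a - mass (Q (k + 1)) a|) atTop (nhds 0) := by
    have l1 : Tendsto (fun n => ∑ a ∈ Finset.range (B (k + 1)),
        ∑ b ∈ Finset.range (B (k + 1)),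
        |cellInt (w (φ n)) (R (φ n) (k + 1)) a b - dens ν ρ (k + 1) a b *
        (mass (R (φ n) (k + 1)) a * mass (R (φ n) (k + 1)) b)|) atTop
        (nhds (∑ a ∈ Finset.range (B (k + 1)), ∑ b ∈ Finset.range (B (k + 1)),
          |ρ (k + 1) a b - dens ν ρ (k + 1) a b * (ν (k + 1) a * ν (k + 1) b)|)) :=
      tendsto_finsetSum _ fun a _ => tendsto_finsetSum _ fun b _ =>
        ((hρ _ a b).sub (((hν _ a).mul (hν _ b)).const_mul _)).abs
    have l2 : Tendsto (fun n => ∑ a ∈ Finset.range (B (k + 1)),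
        |mass (R (φ n) (k + 1)) a - mass (Q (k + 1)) a|) atTop
        (nhds (∑ a ∈ Finset.range (B (k + 1)), |ν (k + 1) a - mass (Q (k + 1)) a|)) :=
      tendsto_finsetSum _ fun a _ => ((hν _ a).sub_const _).abs
    simp only [hstats.dens_mul, sub_self, abs_zero, Finset.sum_const_zero] at l1
    simp only [hQν, sub_self, abs_zero, Finset.sum_const_zero] at l2
    simp only [hQν]
    simpa using l1.add (l2.const_mul (2 + (Fintype.card S : ℝ)))
  obtain ⟨n₀, hn₀⟩ := eventually_atTop.1 (hn.eventually_lt_const (half_pos hδ))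
  refine ⟨n₀, fun n hnn => ?_⟩
  rw [Real.dist_eq, sub_zero, abs_of_nonneg (deltaCutS_nonneg _ _)]
  have h1 := hest n k
  have h2 := hn₀ n hnn.le
  simp only [hw] at h2
  have h3 : W₀.K = U := rfl
  rw [h3] at h1
  linarith

end
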